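/- In the standing setup, let C = C^0 and D = D^0 be components of X̂^0 such that C lies above D. Then C^t lies above D^t (as components of X̂^t) for every t ∈ [0,1]. -/

import Mathlib

open Set Metric Topology Filter

/-- The set of connected components of a set `S`. -/
def componentsOf {α : Type*} [TopologicalSpace α] (S : Set α) : Set (Set α) :=
  {C | ∃ x ∈ S, C = connectedComponentIn S x}

/-- The union of the unbounded connected components of the complement of `K`;
for compact `K` this is the (unique) unbounded component of `ℂ \ K`. -/
def unbddComp (K : Set ℂ) : Set ℂ :=
  {z : ℂ | z ∈ Kᶜ ∧ ¬ Bornology.IsBounded (connectedComponentIn Kᶜ z)}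

/-- `X^t = ℂ \ U^t`, where `U^t` is the unbounded component of `ℂ \ h^t(Bd X)`. -/
def XtSet (h : ℂ → ℝ → ℂ) (X : Set ℂ) (t : ℝ) : Set ℂ :=
  (unbddComp ((fun z => h z t) '' frontier X))ᶜ

/-- `X̂^t = exp⁻¹(X^t \ {0})`. -/
def hatXt (h : ℂ → ℝ → ℂ) (X : Set ℂ) (t : ℝ) : Set ℂ :=
  Complex.exp ⁻¹' (XtSet h X t \ {0})

/-- `X̂ = exp⁻¹(X \ {0})`. -/
def hatSet (X : Set ℂ) : Set ℂ := Complex.exp ⁻¹' (X \ {0})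

/-- The lift `exp⁻¹(Bd(X) \ {0})` of the punctured boundary of `X`. -/
def bdLift (X : Set ℂ) : Set ℂ := Complex.exp ⁻¹' (frontier X \ {0})

/-- The conditions on the path `s` in the definition of "C lies above D":
`s : [0,1] → {z : Re z ≤ 0} \ C`, `s 0 ∈ D`, `s 1 = 0`. -/
def AbovePath (C D : Set ℂ) (s : ℝ → ℂ) : Prop :=
  ContinuousOn s (Set.Icc 0 1) ∧ (∀ u ∈ Set.Icc (0:ℝ) 1, (s u).re ≤ 0 ∧ s u ∉ C) ∧
    s 0 ∈ D ∧ s 1 = 0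

/-- The ray `R = s([0,1]) ∪ [0,∞)` associated to the path `s`. -/
def AboveRay (s : ℝ → ℂ) : Set ℂ := s '' Set.Icc 0 1 ∪ (Complex.ofReal '' Set.Ici 0)

/-- `C` is contained in the unbounded component of `ℂ \ (D ∪ R)` containing `1 + 2πi`. -/
def AboveVia (C D : Set ℂ) (s : ℝ → ℂ) : Prop :=
  ¬ Bornology.IsBounded
      (connectedComponentIn (D ∪ AboveRay s)ᶜ ((1 : ℂ) + 2 * (Real.pi : ℂ) * Complex.I)) ∧
  C ⊆ connectedComponentIn (D ∪ AboveRay s)ᶜ ((1 : ℂ) + 2 * (Real.pi : ℂ) * Complex.I)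

/-- `C` lies above `D`. -/
def LiesAbove (C D : Set ℂ) : Prop := ∃ s : ℝ → ℂ, AbovePath C D s ∧ AboveVia C D s

lemma la_const {α : Type*} [TopologicalSpace α] {S : Set α} (hS : IsPreconnected S)
    {f g : α → ℂ} (hf : ContinuousOn f S) (hg : ContinuousOn g S)
    (he : ∀ x ∈ S, Complex.exp (f x) = Complex.exp (g x)) {x y : α} (hx : x ∈ S) (hy : y ∈ S) :
    f x - g x = f y - g y := by
  have hd : IsDiscrete (range ((↑) : ℤ → ℝ)) := Int.isClosedEmbedding_coe_real.isEmbedding.isDiscrete_range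
  have key : ∀ z ∈ S, ∃ n : ℤ, f z - g z = n * (2 * Real.pi * Complex.I) := by
    intro z hz
    obtain ⟨n, hn⟩ := Complex.exp_eq_exp_iff_exists_int.1 (he z hz)
    exact ⟨n, by rw [hn]; ring⟩
  have h2 := hS.constant_of_mapsTo hd (f := fun z => (f z - g z).im / (2 * Real.pi))
    (by
      apply ContinuousOn.div_const
      exact Complex.continuous_im.comp_continuousOn (hf.sub hg))
    (by
      intro z hz
      obtain ⟨n, hn⟩ := key z hz
      refine ⟨n, ?_⟩
      simp only [hn]
      have := Real.pi_pos
      simp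
      ) hx hy
  obtain ⟨n, hn⟩ := key x hx
  obtain ⟨m, hm⟩ := key y hy
  simp only [hn, hm] at h2
  rw [hn, hm]
  have := Real.pi_pos
  simp at h2
  rw [h2]

/-- log of a nonvanishing function on the plane -/
lemma la_log_plane {f : ℂ → ℂ} (hf : Continuous f) (h0 : ∀ z, f z ≠ 0) :
    ∃ g : ℂ → ℂ, Continuous g ∧ ∀ z, Complex.exp (g z) = f z := by
  have := Complex.isCoveringMapOn_exp.existsUnique_continuousMap_lifts (A := ℂ) 
    ⟨f, hf⟩ (a₀ := 0) (e₀ := Complex.log (f 0)) (Complex.exp_log (h0 0)) h0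
  obtain ⟨g, hg, -⟩ := this
  exact ⟨g, g.continuous, fun z => congrFun hg.2 z⟩

/-- homotopy lifting for exp -/
lemma la_homotopy {A : Type*} [TopologicalSpace A] {S : Set A} {F : A → ℝ → ℂ}
    (hF : ContinuousOn (fun p : A × ℝ => F p.1 p.2) (S ×ˢ Icc 0 1))
    (hne : ∀ a ∈ S, ∀ t ∈ Icc (0:ℝ) 1, F a t ≠ 0)
    {g : A → ℂ} (hg : ContinuousOn g S) (hg0 : ∀ a ∈ S, Complex.exp (g a) = F a 0) :
    ∃ G : A → ℝ → ℂ, ContinuousOn (fun p : A × ℝ => G p.1 p.2) (S ×ˢ Icc 0 1) ∧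
      (∀ a ∈ S, ∀ t ∈ Icc (0:ℝ) 1, Complex.exp (G a t) = F a t) ∧ ∀ a ∈ S, G a 0 = g a := by
  classical
  let K : C(unitInterval × S, {z : ℂ // z ≠ 0}) :=
    ⟨fun p => ⟨F p.2 p.1, hne _ p.2.2 _ p.1.2⟩, by
      apply Continuous.subtype_mk
      exact hF.comp_continuous (f := fun p : unitInterval × S => ((p.2 : A), (p.1 : ℝ))) (by fun_prop)
        (fun p => ⟨p.2.2, p.1.2⟩)⟩
  let g' : C(S, ℂ) := ⟨fun a => g a, hg.domRestrict⟩
  have H0 : ∀ a, K (0, a) = (fun z : ℂ ↦ (⟨_, z.exp_ne_zero⟩ : {z : ℂ // z ≠ 0})) (g' a) := by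
    intro a
    apply Subtype.ext
    exact (hg0 a a.2).symm
  let L := Complex.isCoveringMap_exp.liftHomotopy K g' H0
  have hL1 := Complex.isCoveringMap_exp.liftHomotopy_lifts K g' H0
  have hL0 := Complex.isCoveringMap_exp.liftHomotopy_zero K g' H0
  refine ⟨fun a t => if h : a ∈ S ∧ t ∈ Icc (0:ℝ) 1 then L (⟨t, h.2⟩, ⟨a, h.1⟩) else 0, ?_, ?_, ?_⟩
  · rw [continuousOn_iff_continuous_domRestrict]
    have : Continuous (fun p : ↥(S ×ˢ Icc (0:ℝ) 1) => L (⟨p.1.2, p.2.2⟩, ⟨p.1.1, p.2.1⟩)) := by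
      apply L.continuous.comp
      fun_prop
    convert this using 1
    ext p
    have h1 : p.1.1 ∈ S ∧ p.1.2 ∈ Icc (0:ℝ) 1 := ⟨p.2.1, p.2.2⟩
    simp only [Set.domRestrict_apply]
    rw [dif_pos h1]
  · intro a ha t ht
    have hh : a ∈ S ∧ t ∈ Icc (0:ℝ) 1 := ⟨ha, ht⟩
    simp only [dif_pos hh]
    have := congrFun hL1 (⟨t, ht⟩, ⟨a, ha⟩)
    exact congrArg Subtype.val this
  · intro a ha
    have hh : a ∈ S ∧ (0:ℝ) ∈ Icc (0:ℝ) 1 := ⟨ha, by simp⟩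
    simp only [dif_pos hh]
    exact hL0 ⟨a, ha⟩

/-- no log of `w - x` far away -/
lemma la_no_log {g : ℂ → ℂ} (hg : Continuous g) {x : ℂ} {r : ℝ} (hr : 0 < r)
    (h : ∀ w, ‖w - x‖ = r → Complex.exp (g w) = w - x) : False := by
  have := la_const (S := (univ : Set ℝ)) isPreconnected_univ
    (f := fun θ : ℝ => g (x + r * Complex.exp (θ * Complex.I)))
    (g := fun θ : ℝ => Complex.log r + θ * Complex.I)
    (by fun_prop) (by fun_prop) (by
      intro θ _
      rw [h]
      · rw [Complex.exp_add, Complex.exp_log (by exact_mod_cast hr.ne')]; ring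
      · simp [Complex.norm_exp_ofReal_mul_I, abs_of_pos hr])
    (mem_univ 0) (mem_univ (2 * Real.pi))
  have h2 : Complex.exp (((2 * Real.pi : ℝ) : ℂ) * Complex.I) = 1 := by
    push_cast; exact Complex.exp_two_pi_mul_I
  simp at this

lemma la_frontier_comp {E : Set ℂ} (hE : IsClosed E) (x : ℂ) :
    frontier (connectedComponentIn Eᶜ x) ⊆ E := by
  intro w hw
  by_contra hwE
  have hop : IsOpen Eᶜ := hE.isOpen_compl
  have hw1 : connectedComponentIn Eᶜ w ∈ 𝓝 w :=
    (hop.connectedComponentIn).mem_nhds (mem_connectedComponentIn hwE)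
  have hw2 : w ∈ closure (connectedComponentIn Eᶜ x) := frontier_subset_closure hw
  obtain ⟨u, hu1, hu2⟩ := mem_closure_iff_nhds.1 hw2 _ hw1
  have e1 := connectedComponentIn_eq hu1
  have e2 := connectedComponentIn_eq hu2
  have : w ∈ connectedComponentIn Eᶜ x := by
    rw [e2, ← e1]; exact mem_connectedComponentIn hwE
  rw [(hop.connectedComponentIn).frontier_eq] at hw
  exact hw.2 this

/-- T2: Eilenberg's criterion, hard direction, compact version -/
lemma la_T2 {E : Set ℂ} (hE : IsCompact E) {x : ℂ} (hx : x ∉ E) {L : ℂ → ℂ}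
    (hL : ContinuousOn L E) (hLe : ∀ w ∈ E, Complex.exp (L w) = w - x) :
    ¬ Bornology.IsBounded (connectedComponentIn Eᶜ x) := by
  classical
  intro hb
  set V := connectedComponentIn Eᶜ x with hV
  have hop : IsOpen V := hE.isClosed.isOpen_compl.connectedComponentIn
  have hxV : x ∈ V := mem_connectedComponentIn hx
  have hfr : frontier V ⊆ E := la_frontier_comp hE.isClosed x
  obtain ⟨M, hM⟩ := ContinuousMap.exists_extension' (hE.isClosed.isClosedEmbedding_subtypeVal)
    ⟨fun a : E => L a, hL.domRestrict⟩
  have hM' : ∀ w ∈ E, M w = L w := fun w hw => congrFun hM ⟨w, hw⟩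
  let f : ℂ → ℂ := V.piecewise (fun w => Complex.exp (M w)) (fun w => w - x)
  have hf : Continuous f := by
    apply Continuous.piecewise
    · intro a ha
      have := hfr ha
      rw [hM' a this, hLe a this]
    · fun_prop
    · fun_prop
  obtain ⟨g, hg, hge⟩ := la_log_plane hf (by
    intro z
    by_cases hz : z ∈ V
    · simp [f, hz]
    · simp only [f, Set.piecewise_eq_of_notMem _ _ _ hz]
      intro h; apply hz; rw [sub_eq_zero.1 h]; exact hxV)
  obtain ⟨r, hr⟩ := hb.subset_closedBall x
  refine la_no_log hg (x := x) (r := max r 0 + 1) (by positivity) ?_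
  intro w hw
  rw [hge]
  apply Set.piecewise_eq_of_notMem
  intro h
  have := hr h
  rw [mem_closedBall, dist_eq_norm, hw] at this
  have := le_max_left r 0
  linarith

lemma la_slit {u : ℂ} (h : ‖u - 1‖ < 1) : u ∈ Complex.slitPlane := by
  have := Complex.mem_slitPlane_of_norm_lt_one h
  simpa using this

lemma la_ratio_slit {α β β' : ℂ} (h : ‖β' - β‖ < ‖α - β‖) :
    (α - β') / (α - β) ∈ Complex.slitPlane := by
  have h0 : 0 < ‖α - β‖ := lt_of_le_of_lt (norm_nonneg _) h
  have h1 : α - β ≠ 0 := norm_pos_iff.1 h0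
  apply la_slit
  have : (α - β') / (α - β) - 1 = -((β' - β) / (α - β)) := by
    field_simp; ring
  rw [this, norm_neg, norm_div, div_lt_one h0]
  exact h

lemma la_tendsto_ratio (a c : ℂ) :
    Tendsto (fun w : ℂ => (w - a) / (w - c)) (Bornology.cobounded ℂ) (𝓝 1) := by
  have h1 : Tendsto (fun w : ℂ => (w - c)⁻¹) (Bornology.cobounded ℂ) (𝓝 0) :=
    tendsto_inv₀_cobounded.comp (tendsto_sub_const_cobounded c)
  have h2 : Tendsto (fun w : ℂ => 1 + (c - a) * (w - c)⁻¹) (Bornology.cobounded ℂ) (𝓝 1) := by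
    simpa using (h1.const_mul (c - a)).const_add 1
  refine h2.congr' ?_
  have : ∀ᶠ w in Bornology.cobounded ℂ, w ≠ c := by
    have := Metric.cobounded_le_cocompact (α := ℂ)
    exact this (isCompact_singleton (x := c)).compl_mem_cocompact
  filter_upwards [this] with w hw
  have : w - c ≠ 0 := sub_ne_zero.2 hw
  field_simp; ring

lemma la_tendsto_log_ratio (a c : ℂ) :
    Tendsto (fun w : ℂ => Complex.log ((w - a) / (w - c))) (Bornology.cobounded ℂ) (𝓝 0) := by
  have := (continuousAt_clog (x := 1) (by simp)).tendsto.comp (la_tendsto_ratio a c)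
  rw [Complex.log_one] at this
  exact this

/-- T3: Eilenberg's criterion, hard direction, for closed sets -/
lemma la_T3 {E : Set ℂ} (hE : IsClosed E) {x y : ℂ} (hx : x ∉ E) (hy : y ∉ E) {L : ℂ → ℂ}
    (hL : ContinuousOn L E) (hLe : ∀ w ∈ E, Complex.exp (L w) = (w - x) / (w - y))
    (hlim : Tendsto L (Bornology.cobounded ℂ ⊓ 𝓟 E) (𝓝 0)) :
    x ∈ connectedComponentIn Eᶜ y := by
  classical
  by_cases hxy : x = y
  · subst hxy; exact mem_connectedComponentIn hx
  have hxy' : x - y ≠ 0 := sub_ne_zero.2 hxy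
  have hyx' : y - x ≠ 0 := sub_ne_zero.2 (Ne.symm hxy)
  set E1 : Set ℂ := {ζ | ζ ≠ 0 ∧ y + ζ⁻¹ ∈ E} with hE1
  set E' : Set ℂ := insert 0 E1 with hE'
  have hcinv : ContinuousOn (fun ζ : ℂ => y + ζ⁻¹) {0}ᶜ :=
    continuousOn_const.add (continuousOn_inv₀)
  have hcl : IsClosed E' := by
    rw [← isOpen_compl_iff]
    have : E'ᶜ = {0}ᶜ ∩ (fun ζ : ℂ => y + ζ⁻¹) ⁻¹' Eᶜ := by
      ext ζ; simp [hE', hE1]; tauto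
    rw [this]
    exact hcinv.isOpen_inter_preimage isOpen_compl_singleton hE.isOpen_compl
  obtain ⟨r, hr, hrE⟩ := Metric.isOpen_iff.1 hE.isOpen_compl y hy
  have hbd : E' ⊆ closedBall 0 (1 / r) := by
    rintro ζ (rfl | ⟨h1, h2⟩)
    · simp [hr.le]
    · have : ¬ (y + ζ⁻¹ ∈ ball y r) := fun h => hrE h h2
      simp only [mem_ball, dist_eq_norm, add_sub_cancel_left, not_lt, norm_inv] at this
      simp only [mem_closedBall, dist_zero_right]
      rw [one_div]
      exact le_inv_of_le_inv₀ hr this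
  have hcpt : IsCompact E' := (isCompact_closedBall _ _).of_isClosed_subset hcl hbd
  set a : ℂ := (x - y)⁻¹ with ha
  have ha0 : a ≠ 0 := inv_ne_zero hxy'
  have hya : y + a⁻¹ = x := by rw [ha, inv_inv]; ring
  have haE : a ∉ E' := by
    rintro (h | ⟨-, h2⟩)
    · exact ha0 h
    · rw [hya] at h2; exact hx h2
  let L0 : ℂ → ℂ := fun ζ => if ζ = 0 then 0 else L (y + ζ⁻¹)
  have hL0 : ContinuousOn L0 E' := by
    rintro ζ (rfl | ⟨h1, h2⟩)
    · rw [continuousWithinAt_insert_self, ContinuousWithinAt]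
      have : L0 0 = 0 := by simp [L0]
      rw [this]
      have h3 : Tendsto (fun ζ : ℂ => y + ζ⁻¹) (𝓝[E1] 0) (Bornology.cobounded ℂ ⊓ 𝓟 E) := by
        rw [tendsto_inf]
        constructor
        · have h4 : Tendsto (fun ζ : ℂ => ζ⁻¹) (𝓝[≠] 0) (Bornology.cobounded ℂ) :=
            tendsto_inv₀_nhdsNE_zero
          have h5 := (tendsto_const_add_cobounded y).comp h4
          exact h5.mono_left (nhdsWithin_mono _ (fun z hz => hz.1))
        · rw [tendsto_principal]
          filter_upwards [self_mem_nhdsWithin] with z hz using hz.2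
      refine (hlim.comp h3).congr' ?_
      filter_upwards [self_mem_nhdsWithin] with z hz
      simp [L0, hz.1]
    · rw [continuousWithinAt_insert]
      have h3 : ContinuousWithinAt (fun ζ : ℂ => L (y + ζ⁻¹)) E1 ζ := by
        refine ContinuousWithinAt.comp (g := L) (f := fun ζ : ℂ => y + ζ⁻¹) (t := E) (hL _ h2) ?_ ?_
        · exact (hcinv ζ h1).mono (fun z hz => hz.1)
        · intro z hz; exact hz.2
      refine h3.congr (fun z hz => ?_) ?_
      · simp [L0, hz.1]
      · simp [L0, h1]
  have key := la_T2 hcpt haE (L := fun ζ => L0 ζ - Complex.log (y - x))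
    (hL0.sub continuousOn_const) (by
      rintro ζ (rfl | ⟨h1, h2⟩)
      · simp [L0, Complex.exp_neg, Complex.exp_log hyx', ha]
        rw [← inv_neg]; congr 1; ring
      · simp only [L0, h1, if_false]
        rw [Complex.exp_sub, hLe _ h2, Complex.exp_log hyx', ha]
        have : y + ζ⁻¹ - y = ζ⁻¹ := by ring
        rw [this]
        have h3 : -(x - y) ≠ 0 := neg_ne_zero.2 hxy'
        have h4 : y - x = -(x - y) := by ring
        rw [h4]
        field_simp
        ring)
  set V := connectedComponentIn E'ᶜ a with hV
  have hVsub : V ⊆ E'ᶜ := connectedComponentIn_subset _ _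
  have hVc : IsPreconnected V := isPreconnected_connectedComponentIn
  have hV0 : V ⊆ {0}ᶜ := fun z hz h => hVsub hz (by rw [mem_singleton_iff.1 h]; exact mem_insert _ _)
  set W := (fun ζ : ℂ => y + ζ⁻¹) '' V with hW
  have hWc : IsPreconnected W := hVc.image _ (hcinv.mono hV0)
  have hyW : y ∈ closure W := by
    rw [Metric.mem_closure_iff]
    intro ε hε
    have : ¬ V ⊆ closedBall 0 (1 / ε) := fun h => key (Metric.isBounded_closedBall.subset h)
    obtain ⟨ζ, hζ, hζ2⟩ := not_subset.1 this
    refine ⟨y + ζ⁻¹, ⟨ζ, hζ, rfl⟩, ?_⟩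
    simp only [mem_closedBall, dist_zero_right, not_le] at hζ2
    rw [dist_eq_norm]
    simp only [sub_add_cancel_left, norm_neg, norm_inv]
    rw [one_div] at hζ2
    exact inv_lt_of_inv_lt₀ hε hζ2
  have hWy : IsPreconnected (insert y W) :=
    hWc.subset_closure (subset_insert _ _) (insert_subset hyW subset_closure)
  have hsub : insert y W ⊆ Eᶜ := by
    rintro z (rfl | ⟨ζ, hζ, rfl⟩)
    · exact hy
    · intro h
      exact hVsub hζ (Or.inr ⟨hV0 hζ, h⟩)
  exact hWy.subset_connectedComponentIn (mem_insert _ _) hsub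
    (Or.inr ⟨a, mem_connectedComponentIn haE, hya⟩)

/-- T4: Eilenberg's criterion, easy direction -/
lemma la_T4 {E : Set ℂ} (hE : IsClosed E) {x y : ℂ} (hxy : x ∈ connectedComponentIn Eᶜ y) :
    ∃ L : ℂ → ℂ, ContinuousOn L E ∧ (∀ w ∈ E, Complex.exp (L w) = (w - x) / (w - y)) ∧
      Tendsto L (Bornology.cobounded ℂ ⊓ 𝓟 E) (𝓝 0) := by
  have hyE : y ∈ Eᶜ := by
    by_contra h
    rw [connectedComponentIn_eq_empty h] at hxy
    exact hxy
  have hsub := connectedComponentIn_subset Eᶜ y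
  refine (isPreconnected_connectedComponentIn (x := y) (F := Eᶜ)).induction₂'
    (fun x y => ∃ L : ℂ → ℂ, ContinuousOn L E ∧ (∀ w ∈ E, Complex.exp (L w) = (w - x) / (w - y)) ∧
      Tendsto L (Bornology.cobounded ℂ ⊓ 𝓟 E) (𝓝 0)) ?_ ?_ hxy (mem_connectedComponentIn hyE)
  · intro x hx
    obtain ⟨r, hr, hrE⟩ := Metric.isOpen_iff.1 hE.isOpen_compl x (hsub hx)
    have h1 : ∀ z ∈ E, r ≤ ‖z - x‖ := by
      intro z hz
      by_contra h
      push Not at h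
      exact hrE (by rwa [mem_ball, dist_eq_norm]) hz
    have h2 : ball x r ∈ 𝓝[connectedComponentIn Eᶜ y] x :=
      mem_nhdsWithin_of_mem_nhds (ball_mem_nhds x hr)
    filter_upwards [h2] with x' hx'
    rw [mem_ball, dist_eq_norm] at hx'
    have h3 : ∀ w ∈ E, (w - x') / (w - x) ∈ Complex.slitPlane := fun w hw =>
      la_ratio_slit (hx'.trans_le (h1 w hw))
    have h4 : ∀ w ∈ E, w - x ≠ 0 := fun w hw => norm_pos_iff.1 (hr.trans_le (h1 w hw))
    have hc : ContinuousOn (fun w => Complex.log ((w - x') / (w - x))) E := by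
      apply ContinuousOn.clog _ h3
      apply ContinuousOn.div (by fun_prop) (by fun_prop) h4
    have hl := (la_tendsto_log_ratio x' x).mono_left (inf_le_left (b := 𝓟 E))
    constructor
    · refine ⟨fun w => - Complex.log ((w - x') / (w - x)), hc.neg, ?_, ?_⟩
      · intro w hw
        rw [Complex.exp_neg, Complex.exp_log (Complex.slitPlane_ne_zero (h3 w hw)), inv_div]
      · simpa using hl.neg
    · refine ⟨fun w => Complex.log ((w - x') / (w - x)), hc, ?_, hl⟩
      intro w hw
      rw [Complex.exp_log (Complex.slitPlane_ne_zero (h3 w hw))]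
  · rintro x z u hx hz hu ⟨L1, hL1, he1, ht1⟩ ⟨L2, hL2, he2, ht2⟩
    refine ⟨fun w => L1 w + L2 w, hL1.add hL2, ?_, by simpa using ht1.add ht2⟩
    intro w hw
    rw [Complex.exp_add, he1 w hw, he2 w hw]
    have : w - z ≠ 0 := fun h => hsub hz (by rw [← sub_eq_zero.1 h]; exact hw)
    field_simp

/-- Lemma A: unicoherence -/
lemma la_frontier_conn {C : Set ℂ} (hcl : IsClosed C) (hC : IsPreconnected C)
    (hC' : IsPreconnected Cᶜ) : IsPreconnected (frontier C) := by
  classical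
  rw [isPreconnected_iff_subset_of_fully_disjoint_closed isClosed_frontier]
  intro u v hu hv huv hd
  by_contra hcon
  push Not at hcon
  obtain ⟨q, hq, hqu⟩ := not_subset.1 hcon.1
  obtain ⟨p, hp, hpv⟩ := not_subset.1 hcon.2
  have hqv : q ∈ v := (huv hq).resolve_left hqu
  have hpu : p ∈ u := (huv hp).resolve_right hpv
  obtain ⟨φ, hφ0, hφ1, -⟩ := exists_continuous_zero_one_of_isClosed hu hv hd
  let f : ℂ → ℂ := C.piecewise (fun w => Complex.exp (φ w * (Real.pi * Complex.I)))
    (fun w => Complex.exp (-(φ w * (Real.pi * Complex.I))))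
  have hag : ∀ a ∈ frontier C, Complex.exp (φ a * (Real.pi * Complex.I)) =
      Complex.exp (-(φ a * (Real.pi * Complex.I))) := by
    intro a ha
    rcases huv ha with h | h
    · simp [hφ0 h]
    · simp [hφ1 h, Complex.exp_neg]
  have hf : Continuous f := Continuous.piecewise hag (by fun_prop) (by fun_prop)
  obtain ⟨g, hg, hge⟩ := la_log_plane hf (by
    intro z
    by_cases hz : z ∈ C <;> simp [f, hz])
  have hfc : frontier C ⊆ C := hcl.frontier_subset
  have hfc' : frontier C ⊆ closure Cᶜ := by
    rw [← frontier_compl]; exact frontier_subset_closure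
  have e1 := la_const hC (f := g) (g := fun w => φ w * (Real.pi * Complex.I)) hg.continuousOn
    (by fun_prop) (by
      intro z hz
      rw [hge]; simp [f, hz]) (hfc hp) (hfc hq)
  have e2 := la_const hC'.closure (f := g) (g := fun w => -(φ w * (Real.pi * Complex.I))) hg.continuousOn
    (by fun_prop) (by
      intro z hz
      rw [hge]
      by_cases hz' : z ∈ C
      · have : z ∈ frontier C := by rw [frontier_eq_closure_inter_closure]; exact ⟨subset_closure hz', hz⟩
        rw [← hag z this]; simp [f, hz']
      · simp [f, hz']) (hfc' hp) (hfc' hq)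
  simp only [hφ0 hpu, hφ1 hqv] at e1 e2
  have h3 : (Real.pi : ℂ) * Complex.I = 0 := by
    simp at e1 e2
    have := e1.symm.trans e2
    linear_combination (-1/2 : ℂ) * this
  simp [Real.pi_ne_zero] at h3

/-- two logs on a connected unbounded set agree -/
lemma la_unique {A : Set ℂ} (hA : IsPreconnected A) {l : Filter ℂ} [l.NeBot] (hl : l ≤ 𝓟 A)
    {f g : ℂ → ℂ} (hf : ContinuousOn f A)
    (hg : ContinuousOn g A) (he : ∀ x ∈ A, Complex.exp (f x) = Complex.exp (g x))
    (hlim : Tendsto (fun x => f x - g x) l (𝓝 0)) {x : ℂ} (hx : x ∈ A) :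
    f x = g x := by
  have h1 : Tendsto (fun _ : ℂ => f x - g x) l (𝓝 0) := by
    refine hlim.congr' ?_
    have : A ∈ l := hl (mem_principal_self A)
    filter_upwards [this] with y hy
    exact la_const hA hf hg he hy hx
  exact sub_eq_zero.1 (tendsto_nhds_unique tendsto_const_nhds h1)

lemma la_neBot {A : Set ℂ} (hAb : ¬ Bornology.IsBounded A) :
    (Bornology.cobounded ℂ ⊓ 𝓟 A).NeBot := by
  rw [inf_principal_neBot_iff]
  intro U hU
  by_contra h
  rw [not_nonempty_iff_eq_empty] at h
  apply hAb
  have : Bornology.IsBounded Uᶜ := by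
    rw [← Bornology.isCobounded_compl_iff, compl_compl]; exact hU
  exact this.subset (fun x hx hxU => by
    have : x ∈ U ∩ A := ⟨hxU, hx⟩
    rw [h] at this; exact this)

/-- Lemma J -/
lemma la_J {A B : Set ℂ} {b : ℂ} (hA : IsClosed A) (hAc : IsPreconnected A)
    (hAb : ¬ Bornology.IsBounded A) (hB : B ⊆ connectedComponentIn Aᶜ b) :
    ∃ L : ℂ → ℂ → ℂ, ContinuousOn (fun p : ℂ × ℂ => L p.1 p.2) (B ×ˢ A) ∧
      (∀ β ∈ B, ∀ α ∈ A, Complex.exp (L β α) = (α - β) / (α - b)) ∧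
      ∀ β ∈ B, Tendsto (L β) (Bornology.cobounded ℂ ⊓ 𝓟 A) (𝓝 0) := by
  classical
  have hT : ∀ β, ∃ L : ℂ → ℂ, β ∈ B → ContinuousOn L A ∧
      (∀ w ∈ A, Complex.exp (L w) = (w - β) / (w - b)) ∧
      Tendsto L (Bornology.cobounded ℂ ⊓ 𝓟 A) (𝓝 0) := by
    intro β
    by_cases h : β ∈ B
    · obtain ⟨L, hL⟩ := la_T4 hA (hB h)
      exact ⟨L, fun _ => hL⟩
    · exact ⟨0, fun h' => absurd h' h⟩
  choose L hL using hT
  refine ⟨L, ?_, fun β hβ => (hL β hβ).2.1, fun β hβ => (hL β hβ).2.2⟩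
  rintro ⟨β0, α0⟩ ⟨hβ0, hα0⟩
  simp only at hβ0 hα0
  have hsub := connectedComponentIn_subset Aᶜ b
  obtain ⟨r, hr, hrE⟩ := Metric.isOpen_iff.1 hA.isOpen_compl β0 (hsub (hB hβ0))
  have h1 : ∀ z ∈ A, r ≤ ‖z - β0‖ := by
    intro z hz
    by_contra h
    push Not at h
    exact hrE (by rwa [mem_ball, dist_eq_norm]) hz
  have h4 : ∀ w ∈ A, w - β0 ≠ 0 := fun w hw => norm_pos_iff.1 (hr.trans_le (h1 w hw))
  have := la_neBot hAb
  have key : ∀ β ∈ B, ‖β - β0‖ < r → ∀ α ∈ A,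
      L β α = L β0 α + Complex.log ((α - β) / (α - β0)) := by
    intro β hβ hβr α hα
    have h3 : ∀ w ∈ A, (w - β) / (w - β0) ∈ Complex.slitPlane := fun w hw =>
      la_ratio_slit (hβr.trans_le (h1 w hw))
    refine la_unique hAc (l := Bornology.cobounded ℂ ⊓ 𝓟 A) inf_le_right (f := L β)
      (g := fun α => L β0 α + Complex.log ((α - β) / (α - β0))) (hL β hβ).1 ?_ ?_ ?_ hα
    · apply (hL β0 hβ0).1.add
      apply ContinuousOn.clog _ h3
      apply ContinuousOn.div (by fun_prop) (by fun_prop) h4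
    · intro w hw
      rw [Complex.exp_add, (hL β hβ).2.1 w hw, (hL β0 hβ0).2.1 w hw,
        Complex.exp_log (Complex.slitPlane_ne_zero (h3 w hw))]
      have := h4 w hw
      field_simp
    · have := (la_tendsto_log_ratio β β0).mono_left (inf_le_left (b := 𝓟 A))
      simpa using (hL β hβ).2.2.sub ((hL β0 hβ0).2.2.add this)
  have hc : ContinuousWithinAt (fun p : ℂ × ℂ => L β0 p.2 + Complex.log ((p.2 - p.1) / (p.2 - β0)))
      (B ×ˢ A) (β0, α0) := by
    apply ContinuousWithinAt.add
    · exact ((hL β0 hβ0).1 α0 hα0).comp (t := A) (f := fun p : ℂ × ℂ => p.2) (x := (β0, α0))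
        continuous_snd.continuousWithinAt (fun p hp => hp.2)
    · apply ContinuousWithinAt.clog
      · exact ContinuousWithinAt.div (f := fun p : ℂ × ℂ => p.2 - p.1) (g := fun p => p.2 - β0) (by fun_prop) (by fun_prop) (h4 _ hα0)
      · simp [div_self (h4 _ hα0)]
  refine hc.congr_of_eventuallyEq ?_ ?_
  · have h5 : ball β0 r ×ˢ univ ∈ 𝓝[B ×ˢ A] (β0, α0) :=
      mem_nhdsWithin_of_mem_nhds (prod_mem_nhds (ball_mem_nhds _ hr) univ_mem)
    filter_upwards [h5, self_mem_nhdsWithin] with p hp hp2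
    exact key _ hp2.1 (by simpa [mem_ball, dist_eq_norm] using hp.1) _ hp2.2
  · exact key _ hβ0 (by simpa using hr) _ hα0

lemma la_sub_of_frontier {α : Type*} [TopologicalSpace α] {s u : Set α} (hs : IsPreconnected s)
    (hd : ∀ z ∈ s, z ∉ frontier u) {x : α} (hx : x ∈ s) (hxu : x ∈ u) : s ⊆ u := by
  have key : ∀ z ∈ s, z ∈ closure u → z ∈ interior u := by
    intro z hz hzc
    by_contra h
    exact hd z hz ⟨hzc, h⟩
  have h1 : s ⊆ interior u := by
    refine hs.subset_left_of_subset_union isOpen_interior (isClosed_closure (s := u)).isOpen_compl ?_ ?_ ?_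
    · rw [disjoint_compl_right_iff_subset]
      exact interior_subset.trans subset_closure
    · intro z hz
      by_cases h : z ∈ closure u
      · exact Or.inl (key z hz h)
      · exact Or.inr h
    · exact ⟨x, hx, key x hx (subset_closure hxu)⟩
  exact h1.trans interior_subset

lemma la_comp_closed {Z : Set ℂ} (hZ : IsClosed Z) (x : ℂ) : IsClosed (connectedComponentIn Z x) := by
  by_cases hx : x ∈ Z
  · apply isClosed_of_closure_subset
    refine isPreconnected_connectedComponentIn.closure.subset_connectedComponentIn
      (subset_closure (mem_connectedComponentIn hx)) ?_
    exact hZ.closure_subset_iff.2 (connectedComponentIn_subset _ _)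
  · rw [connectedComponentIn_eq_empty hx]; exact isClosed_empty

lemma la_comp_frontier {Z : Set ℂ} (hZ : IsClosed Z) (x : ℂ) :
    frontier (connectedComponentIn Z x) = connectedComponentIn Z x ∩ frontier Z := by
  have hcl := la_comp_closed hZ x
  ext p
  constructor
  · intro hp
    have hpC := hcl.frontier_subset hp
    have hpZ := connectedComponentIn_subset _ _ hpC
    refine ⟨hpC, subset_closure hpZ, fun hpi => ?_⟩
    obtain ⟨r, hr, hb⟩ := Metric.isOpen_iff.1 isOpen_interior p hpi
    have h1 : ball p r ⊆ connectedComponentIn Z x := by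
      rw [connectedComponentIn_eq hpC]
      exact (convex_ball p r).isPreconnected.subset_connectedComponentIn (mem_ball_self hr)
        (hb.trans interior_subset)
    exact hp.2 (mem_interior.2 ⟨_, h1, isOpen_ball, mem_ball_self hr⟩)
  · rintro ⟨h1, h2⟩
    exact ⟨subset_closure h1, fun h => h2.2 (interior_mono (connectedComponentIn_subset _ _) h)⟩

/-- the complement of a component is connected -/
lemma la_comp_compl {Z : Set ℂ} (hZ : IsClosed Z) (hne : Zᶜ.Nonempty) (hc : IsPreconnected Zᶜ) (x : ℂ) :
    IsPreconnected (connectedComponentIn Z x)ᶜ := by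
  obtain ⟨u, hu⟩ := hne
  refine isPreconnected_of_forall u (fun z hz => ?_)
  have hsub : Zᶜ ⊆ (connectedComponentIn Z x)ᶜ :=
    compl_subset_compl.2 (connectedComponentIn_subset _ _)
  by_cases hzZ : z ∈ Z
  · set D := connectedComponentIn Z z with hD
    have hne : (frontier D).Nonempty := by
      rw [nonempty_frontier_iff]
      refine ⟨⟨z, mem_connectedComponentIn hzZ⟩, fun h => ?_⟩
      have : u ∈ D := by rw [h]; trivial
      exact hu (connectedComponentIn_subset _ _ this)
    obtain ⟨p, hp⟩ := hne
    rw [la_comp_frontier hZ] at hp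
    have hp2 : p ∈ closure Zᶜ := by
      have := hp.2
      rw [frontier_eq_closure_inter_closure] at this
      exact this.2
    have h1 : IsPreconnected (insert p Zᶜ) :=
      hc.subset_closure (subset_insert _ _) (insert_subset hp2 subset_closure)
    refine ⟨insert p Zᶜ ∪ D, ?_, Or.inl (Or.inr hu), Or.inr (mem_connectedComponentIn hzZ),
      IsPreconnected.union p (mem_insert _ _) hp.1 h1 isPreconnected_connectedComponentIn⟩
    have hDs : D ⊆ (connectedComponentIn Z x)ᶜ := by
      intro w hw hw2
      apply hz
      rw [connectedComponentIn_eq hw2, ← connectedComponentIn_eq hw]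
      exact mem_connectedComponentIn hzZ
    rintro w ((rfl | hw) | hw)
    · exact hDs hp.1
    · exact hsub hw
    · exact hDs hw
  · exact ⟨Zᶜ, hsub, hu, hzZ, hc⟩

lemma la_re_neg {Y : Set ℂ} (hYb : Y ⊆ ball 0 1) {z : ℂ} (hz : Complex.exp z ∈ Y) : z.re < 0 := by
  have := hYb hz
  rw [mem_ball_zero_iff, Complex.norm_exp] at this
  simpa using this

/-- the lifted complement is connected -/
lemma la_hat_compl {Y : Set ℂ} (hY : IsClosed Y) (h0 : (0:ℂ) ∈ Y) (hYb : Y ⊆ ball 0 1)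
    (hc : IsPreconnected Yᶜ) : IsPreconnected (Complex.exp ⁻¹' Y)ᶜ := by
  set W := (Complex.exp ⁻¹' Y)ᶜ with hW
  have hWo : IsOpen W := (hY.preimage Complex.continuous_exp).isOpen_compl
  have hHP : {z : ℂ | 0 ≤ z.re} ⊆ W := by
    intro z hz hzY
    exact absurd (la_re_neg hYb hzY) (not_lt.2 hz)
  have hHPc : IsPreconnected {z : ℂ | 0 ≤ z.re} := (convex_halfSpace_re_ge 0).isPreconnected
  set W0 := connectedComponentIn W 0 with hW0
  have hHP0 : {z : ℂ | 0 ≤ z.re} ⊆ W0 := hHPc.subset_connectedComponentIn (by simp) hHP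
  have hW0W : W0 ⊆ W := connectedComponentIn_subset _ _
  have hinv : ∀ z ∈ W0, ∀ n : ℤ, z + n * (2 * Real.pi * Complex.I) ∈ W0 := by
    intro z hz n
    have h1 : IsPreconnected ((fun z => z + n * (2 * Real.pi * Complex.I)) '' W0) :=
      isPreconnected_connectedComponentIn.image _ (by fun_prop)
    have h2 : (n * (2 * Real.pi * Complex.I) : ℂ) ∈ W0 := hHP0 (by simp)
    have h3 := h1.subset_connectedComponentIn (F := W) (x := n * (2 * Real.pi * Complex.I))
      ⟨0, hHP0 (by simp), by simp⟩ (by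
        rintro _ ⟨w, hw, rfl⟩ hw2
        apply hW0W hw
        simp only [mem_preimage] at hw2 ⊢
        rwa [Complex.exp_periodic.int_mul n] at hw2)
    rw [hW0, connectedComponentIn_eq h2]
    exact h3 ⟨z, hz, rfl⟩
  have hall : W ⊆ W0 := by
    intro z hz
    by_contra hz0
    have ho1 : IsOpen W0 := hWo.connectedComponentIn
    have ho2 : IsOpen (W \ W0) := by
      have : W \ W0 = ⋃ z ∈ W \ W0, connectedComponentIn W z := by
        ext w
        simp only [mem_iUnion]
        constructor
        · intro hw; exact ⟨w, hw, mem_connectedComponentIn hw.1⟩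
        · rintro ⟨v, hv, hwv⟩
          refine ⟨connectedComponentIn_subset _ _ hwv, fun hw0 => hv.2 ?_⟩
          rw [hW0, connectedComponentIn_eq hw0, ← connectedComponentIn_eq hwv]
          exact mem_connectedComponentIn hv.1
      rw [this]
      exact isOpen_biUnion (fun _ _ => hWo.connectedComponentIn)
    obtain ⟨w, hw, ⟨a, ha, haw⟩, ⟨b, hb, hbw⟩⟩ := hc (Complex.exp '' W0) (Complex.exp '' (W \ W0)) (Complex.isOpenMap_exp _ ho1)
      (Complex.isOpenMap_exp _ ho2) (by
        intro w hw
        have hw0 : w ≠ 0 := by rintro rfl; exact hw h0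
        have : Complex.log w ∈ W := by
          rw [hW, mem_compl_iff, mem_preimage, Complex.exp_log hw0]; exact hw
        by_cases h : Complex.log w ∈ W0
        · exact Or.inl ⟨_, h, Complex.exp_log hw0⟩
        · exact Or.inr ⟨_, ⟨this, h⟩, Complex.exp_log hw0⟩)
      ⟨Complex.exp 0, hHP (show (0:ℝ) ≤ (0:ℂ).re by simp), 0, hHP0 (show (0:ℝ) ≤ (0:ℂ).re by simp), rfl⟩
      ⟨Complex.exp z, hz, z, ⟨hz, hz0⟩, rfl⟩
    obtain ⟨n, hn⟩ := Complex.exp_eq_exp_iff_exists_int.1 (hbw.trans haw.symm)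
    apply hb.2
    rw [hn]
    exact hinv a ha n
  have : W = W0 := hall.antisymm hW0W
  rw [this]
  exact isPreconnected_connectedComponentIn

/-- in a compact set, a component inside a relatively open set is inside a clopen set -/
lemma la_clopen {S U : Set ℂ} (hS : IsCompact S) (hU : IsOpen U) {x : ℂ} (hx : x ∈ S)
    (hsub : connectedComponentIn S x ⊆ U) :
    ∃ V O : Set ℂ, IsClosed V ∧ IsOpen O ∧ V = S ∩ O ∧ x ∈ V ∧ V ⊆ U := by
  have : CompactSpace S := isCompact_iff_compactSpace.1 hS
  let N := { s : Set S // IsClopen s ∧ (⟨x, hx⟩ : S) ∈ s }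
  have hN : Nonempty N := ⟨⟨univ, isClopen_univ, mem_univ _⟩⟩
  obtain ⟨⟨s, hs, hxs⟩, hsU⟩ := exists_subset_nhds_of_compactSpace (X := S) (ι := N)
    (V := fun s => s.val) (by
      rintro ⟨s, hs, hxs⟩ ⟨t, ht, hxt⟩
      exact ⟨⟨s ∩ t, hs.inter ht, ⟨hxs, hxt⟩⟩, inter_subset_left, inter_subset_right⟩)
    (fun s => s.2.1.1) (U := Subtype.val ⁻¹' U) (by
      intro y hy
      rw [← connectedComponent_eq_iInter_isClopen] at hy
      apply (hU.preimage continuous_subtype_val).mem_nhds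
      apply hsub
      rw [connectedComponentIn_eq_image hx]
      exact ⟨y, hy, rfl⟩)
  obtain ⟨O, hO, hOs⟩ := isOpen_induced_iff.1 hs.2
  refine ⟨Subtype.val '' s, O, ?_, hO, ?_, ⟨_, hxs, rfl⟩, ?_⟩
  · exact (hs.1.isCompact.image continuous_subtype_val).isClosed
  · rw [← hOs, Subtype.image_preimage_coe]
  · rintro _ ⟨y, hy, rfl⟩
    exact hsU hy

/-- components of the lift reach to the left -/
lemma la_left {X : Set ℂ} (hX : IsCompact X) (hXc : IsPreconnected X) (hXns : IsPreconnected Xᶜ)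
    (h0 : (0:ℂ) ∈ frontier X) (hXb : X ⊆ ball 0 1) {c : ℂ} (hc : Complex.exp c ∈ X) (m : ℝ) :
    ∃ z ∈ connectedComponentIn (Complex.exp ⁻¹' X) c, z.re < m := by
  by_contra hcon
  push Not at hcon
  set C := connectedComponentIn (Complex.exp ⁻¹' X) c with hC
  have hcC : c ∈ C := mem_connectedComponentIn hc
  set ε := Real.exp m / 2 with hε
  have hm : 0 < Real.exp m := Real.exp_pos m
  have hε0 : 0 < ε := by positivity
  have hεm : ε < Real.exp m := by rw [hε]; linarith
  set S := X ∩ {z : ℂ | ε ≤ ‖z‖} with hS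
  have hScpt : IsCompact S := hX.inter_right (isClosed_le continuous_const continuous_norm)
  have h02 : (0:ℂ) ∈ connectedComponentIn Sᶜ 2 := by
    have h1 : (0:ℂ) ∈ closure Xᶜ := by
      rw [frontier_eq_closure_inter_closure] at h0; exact h0.2
    have h2 : IsPreconnected (insert 0 Xᶜ) :=
      hXns.subset_closure (subset_insert _ _) (insert_subset h1 subset_closure)
    refine h2.subset_connectedComponentIn (F := Sᶜ) (x := 2) ?_ ?_ (mem_insert _ _)
    · right
      intro h
      have := hXb h
      norm_num [mem_ball_zero_iff] at this
    · rintro z (rfl | hz)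
      · rintro ⟨-, h⟩
        simp at h; linarith
      · exact fun h => hz h.1
  obtain ⟨L, hLc, hLe, -⟩ := la_T4 hScpt.isClosed h02
  have hre : ∀ w ∈ S, 0 < (2 - w).re := by
    intro w hw
    have h1 := hXb hw.1
    rw [mem_ball_zero_iff] at h1
    have := Complex.abs_re_le_norm w
    have := le_abs_self w.re
    simp
    linarith
  set ℓ : ℂ → ℂ := fun w => L w + Complex.log (2 - w) + Real.pi * Complex.I with hℓ
  have hℓc : ContinuousOn ℓ S := by
    apply ContinuousOn.add _ continuousOn_const
    apply hLc.add
    apply ContinuousOn.clog (by fun_prop)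
    intro w hw
    exact Or.inl (hre w hw)
  have hℓe : ∀ w ∈ S, Complex.exp (ℓ w) = w := by
    intro w hw
    have h1 : (2 - w) ≠ 0 := by
      intro h
      have := hre w hw
      rw [h] at this; simp at this
    have h2 : w - 2 ≠ 0 := by
      intro h; apply h1; linear_combination -h
    simp only [hℓ]
    rw [Complex.exp_add, Complex.exp_add, hLe w hw, Complex.exp_log h1, Complex.exp_pi_mul_I]
    field_simp
    ring
  have hcS : Complex.exp c ∈ S := by
    refine ⟨hc, ?_⟩
    simp only [mem_ofPred_eq, Complex.norm_exp]
    exact hεm.le.trans (Real.exp_le_exp.2 (hcon c hcC))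
  have hF : connectedComponentIn S (Complex.exp c) ⊆ {z : ℂ | ε < ‖z‖} := by
    intro w hw
    have h1 : IsPreconnected ((fun w => ℓ w - ℓ (Complex.exp c) + c) ''
        connectedComponentIn S (Complex.exp c)) := by
      apply isPreconnected_connectedComponentIn.image
      exact ((hℓc.mono (connectedComponentIn_subset _ _)).sub continuousOn_const).add continuousOn_const
    have hex : ∀ w ∈ S, Complex.exp (ℓ w - ℓ (Complex.exp c) + c) = w := by
      intro w hw
      rw [Complex.exp_add, Complex.exp_sub, hℓe w hw, hℓe _ hcS]
      have := Complex.exp_ne_zero c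
      field_simp
    have h2 := h1.subset_connectedComponentIn (F := Complex.exp ⁻¹' X) (x := c)
      ⟨_, mem_connectedComponentIn hcS, by simp⟩ (by
        rintro _ ⟨w, hw, rfl⟩
        have := connectedComponentIn_subset _ _ hw
        simp only [mem_preimage, hex w this]
        exact this.1)
    have h3 := hcon _ (h2 ⟨w, hw, rfl⟩)
    have h4 := hex w (connectedComponentIn_subset _ _ hw)
    have h5 : ‖w‖ = Real.exp (ℓ w - ℓ (Complex.exp c) + c).re := by
      rw [← Complex.norm_exp, h4]
    simp only [mem_ofPred_eq, h5]
    exact hεm.trans_le (Real.exp_le_exp.2 h3)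
  have hU : IsOpen {z : ℂ | ε < ‖z‖} := isOpen_lt continuous_const continuous_norm
  obtain ⟨V, O, hV, hO, hVO, hxV, hVU⟩ := la_clopen hScpt hU hcS hF
  have hXcl := hX.isClosed
  have h0X : (0:ℂ) ∈ X := hXcl.frontier_subset h0
  have h0V : (0:ℂ) ∉ V := by
    intro h
    have := hVU h
    simp at this; linarith
  have hkey : ∀ w ∈ X, w ∈ O ∩ {z : ℂ | ε < ‖z‖} ↔ w ∈ V := by
    intro w hw
    constructor
    · rintro ⟨h1, h2⟩
      rw [hVO]
      have h3 : ε < ‖w‖ := h2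
      exact ⟨⟨hw, show ε ≤ ‖w‖ from h3.le⟩, h1⟩
    · intro h
      refine ⟨?_, hVU h⟩
      rw [hVO] at h; exact h.2
  obtain ⟨w, hw, hw1, hw2⟩ := hXc (O ∩ {z : ℂ | ε < ‖z‖}) Vᶜ (hO.inter hU) hV.isOpen_compl (by
    intro w hw
    by_cases h : w ∈ V
    · exact Or.inl ((hkey w hw).2 h)
    · exact Or.inr h) ⟨_, hc, (hkey _ hc).2 hxV⟩ ⟨0, h0X, h0V⟩
  exact hw2 ((hkey w hw).1 hw1)

lemma la_left_frontier {X : Set ℂ} (hX : IsCompact X) (hXc : IsPreconnected X) (hXns : IsPreconnected Xᶜ)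
    (h0 : (0:ℂ) ∈ frontier X) (hXb : X ⊆ ball 0 1) {c : ℂ} (hc : Complex.exp c ∈ X) (m : ℝ) :
    ∃ z ∈ frontier (connectedComponentIn (Complex.exp ⁻¹' X) c), z.re < m := by
  by_contra hcon
  push Not at hcon
  obtain ⟨z, hz, hzm⟩ := la_left hX hXc hXns h0 hXb hc m
  have h1 : {z : ℂ | z.re < m} ⊆ connectedComponentIn (Complex.exp ⁻¹' X) c := by
    refine la_sub_of_frontier (convex_halfSpace_re_lt m).isPreconnected ?_ hzm hz
    intro w hw hw2
    exact absurd hw (not_lt.2 (hcon w hw2))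
  have h2 : (0:ℂ) ∈ closure Xᶜ := by
    rw [frontier_eq_closure_inter_closure] at h0; exact h0.2
  obtain ⟨w, hw, hwd⟩ := Metric.mem_closure_iff.1 h2 _ (Real.exp_pos m)
  have h0X : (0:ℂ) ∈ X := hX.isClosed.frontier_subset h0
  have hw0 : w ≠ 0 := by rintro rfl; exact hw h0X
  have h3 : Complex.log w ∈ {z : ℂ | z.re < m} := by
    simp only [mem_ofPred_eq, Complex.log_re]
    rw [Real.log_lt_iff_lt_exp (norm_pos_iff.2 hw0)]
    simpa using hwd
  have := connectedComponentIn_subset _ _ (h1 h3)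
  rw [mem_preimage, Complex.exp_log hw0] at this
  exact hw this

/-- normalization at the left end -/
noncomputable def laB : ℂ := (1 : ℂ) + 2 * (Real.pi : ℂ) * Complex.I

lemma laB_re : laB.re = 1 := by simp [laB]
lemma laB_im : laB.im = 2 * Real.pi := by simp [laB]

lemma la_log_div {u v : ℂ} (hu : 0 < u.re) (hv : 0 < v.re) :
    Complex.log (u / v) = Complex.log u - Complex.log v := by
  have hu0 : u ≠ 0 := by rintro rfl; simp at hu
  have hv0 : v ≠ 0 := by rintro rfl; simp at hv
  have h1 : Complex.exp (Complex.log u - Complex.log v) = u / v := by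
    rw [Complex.exp_sub, Complex.exp_log hu0, Complex.exp_log hv0]
  rw [← h1]
  have hau := abs_lt.1 (Complex.abs_arg_lt_pi_div_two_iff.2 (Or.inl hu))
  have hav := abs_lt.1 (Complex.abs_arg_lt_pi_div_two_iff.2 (Or.inl hv))
  apply Complex.log_exp <;> simp only [Complex.sub_im, Complex.log_im] <;> linarith [hau.1, hau.2, hav.1, hav.2]

lemma la_log_neg {x : ℂ} (hx : x.im < 0) : Complex.log (-x) = Complex.log x + Real.pi * Complex.I := by
  rw [Complex.log, Complex.log, Complex.arg_neg_eq_arg_add_pi_of_im_neg hx, norm_neg]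
  push_cast; ring

/-- left-end filter -/
def laLeft (A : Set ℂ) : Filter ℂ := comap Complex.re atBot ⊓ 𝓟 A

lemma laLeft_le (A : Set ℂ) : laLeft A ≤ Bornology.cobounded ℂ ⊓ 𝓟 A := by
  refine inf_le_inf_right _ ?_
  rw [← comap_norm_atTop, ← tendsto_iff_comap]
  have h1 : Tendsto (fun z : ℂ => -z.re) (comap Complex.re atBot) atTop :=
    tendsto_neg_atBot_atTop.comp tendsto_comap
  refine tendsto_atTop_mono (fun z => ?_) h1
  exact (neg_le_abs _).trans (Complex.abs_re_le_norm z)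

lemma laLeft_neBot {A : Set ℂ} (hA : ∀ m : ℝ, ∃ z ∈ A, z.re < m) : (laLeft A).NeBot := by
  rw [laLeft, inf_principal_neBot_iff]
  intro U hU
  obtain ⟨V, hV, hVU⟩ := mem_comap.1 hU
  obtain ⟨m, hm⟩ := mem_atBot_sets.1 hV
  obtain ⟨z, hz, hzm⟩ := hA m
  exact ⟨z, hVU (hm _ hzm.le), hz⟩

lemma laLeft_lt (A : Set ℂ) (m : ℝ) : ∀ᶠ z in laLeft A, z.re < m := by
  have : ∀ᶠ z in comap Complex.re atBot, z.re < m :=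
    tendsto_comap.eventually (eventually_lt_atBot m)
  exact this.filter_mono inf_le_left

lemma laLeft_mem (A : Set ℂ) : ∀ᶠ z in laLeft A, z ∈ A :=
  Filter.Eventually.filter_mono inf_le_right (eventually_principal.2 (fun _ h => h))

lemma la_unbdd {A : Set ℂ} (hA : ∀ m : ℝ, ∃ z ∈ A, z.re < m) : ¬ Bornology.IsBounded A := by
  intro h
  obtain ⟨R, hR⟩ := h.subset_closedBall 0
  obtain ⟨z, hz, hzm⟩ := hA (-R)
  have h1 := hR hz
  rw [mem_closedBall_zero_iff] at h1
  have := (neg_le_abs z.re).trans (Complex.abs_re_le_norm z)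
  linarith

lemma la_log_diff (A : Set ℂ) (d e : ℂ) :
    Tendsto (fun z => Complex.log (d - z) - Complex.log (e - z)) (laLeft A) (𝓝 0) := by
  have h1 := (la_tendsto_log_ratio d e).mono_left ((laLeft_le A).trans inf_le_left)
  refine h1.congr' ?_
  filter_upwards [laLeft_lt A d.re, laLeft_lt A e.re] with z hz1 hz2
  rw [← la_log_div (by simpa using hz1) (by simpa using hz2)]
  congr 1
  rw [← neg_sub d z, ← neg_sub e z, neg_div_neg_eq]

/-- data of a component in good position -/
structure LaGood (C : Set ℂ) : Prop where
  closed : IsClosed C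
  conn : IsPreconnected C
  compl : IsPreconnected Cᶜ
  neg : ∀ z ∈ C, z.re < 0
  left : ∀ m : ℝ, ∃ z ∈ C, z.re < m

/-- an order-normalized logarithm of `w - z` -/
structure LaP (C D : Set ℂ) (Λ : ℂ → ℂ → ℂ) : Prop where
  cont : ContinuousOn (fun p : ℂ × ℂ => Λ p.1 p.2) (C ×ˢ D)
  exp : ∀ z ∈ C, ∀ w ∈ D, Complex.exp (Λ z w) = w - z
  lim : ∀ z ∈ C, Tendsto (fun w => Λ z w - Complex.log (laB - w) + Real.pi * Complex.I)
    (Bornology.cobounded ℂ ⊓ 𝓟 D) (𝓝 0)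

structure LaQ (C D : Set ℂ) (Λ : ℂ → ℂ → ℂ) : Prop where
  cont : ContinuousOn (fun p : ℂ × ℂ => Λ p.1 p.2) (C ×ˢ D)
  exp : ∀ z ∈ C, ∀ w ∈ D, Complex.exp (Λ z w) = w - z
  lim : ∀ w ∈ D, Tendsto (fun z => Λ z w - Complex.log (laB - z))
    (Bornology.cobounded ℂ ⊓ 𝓟 C) (𝓝 0)

lemma la_subB {w : ℂ} (hw : w.re ≤ 0) : 0 < (laB - w).re := by
  simp [laB_re]; linarith

lemma la_ne_of_re {u : ℂ} (h : 0 < u.re) : u ≠ 0 := by rintro rfl; simp at h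

lemma la_comp_b {C D : Set ℂ} (hD : LaGood D) (hCD : Disjoint C D) :
    C ⊆ connectedComponentIn Dᶜ laB := by
  have hb : laB ∈ Dᶜ := fun h => by have := hD.neg _ h; rw [laB_re] at this; linarith
  rw [hD.compl.connectedComponentIn hb]
  exact hCD.subset_compl_right

lemma la_logb_cont {D : Set ℂ} (hD : LaGood D) : ContinuousOn (fun w => Complex.log (laB - w)) D := by
  apply ContinuousOn.clog (by fun_prop)
  intro w hw
  exact Or.inl (la_subB (hD.neg w hw).le)

lemma la_existsP {C D : Set ℂ} (hD : LaGood D) (hCD : Disjoint C D) : ∃ Λ, LaP C D Λ := by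
  obtain ⟨L, hLc, hLe, hLl⟩ := la_J hD.closed hD.conn (la_unbdd hD.left) (la_comp_b hD hCD)
  refine ⟨fun z w => L z w + Complex.log (laB - w) - Real.pi * Complex.I, ⟨?_, ?_, ?_⟩⟩
  · refine (hLc.add ?_).sub continuousOn_const
    exact (la_logb_cont hD).comp (f := fun p : ℂ × ℂ => p.2) continuous_snd.continuousOn (fun p hp => hp.2)
  · intro z hz w hw
    have h1 := la_ne_of_re (la_subB (hD.neg w hw).le)
    have h2 : w - laB ≠ 0 := by rw [← neg_sub]; exact neg_ne_zero.2 h1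
    rw [Complex.exp_sub, Complex.exp_add, hLe z hz w hw, Complex.exp_log h1, Complex.exp_pi_mul_I]
    field_simp
    ring
  · intro z hz
    refine (hLl z hz).congr (fun w => ?_)
    ring

lemma la_existsQ {C D : Set ℂ} (hC : LaGood C) (hCD : Disjoint C D) : ∃ Λ, LaQ C D Λ := by
  obtain ⟨L, hLc, hLe, hLl⟩ := la_J hC.closed hC.conn (la_unbdd hC.left) (la_comp_b hC hCD.symm)
  refine ⟨fun z w => L w z + Complex.log (laB - z), ⟨?_, ?_, ?_⟩⟩
  · refine ContinuousOn.add ?_ ?_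
    · exact hLc.comp (f := fun p : ℂ × ℂ => (p.2, p.1)) (by fun_prop) (fun p hp => ⟨hp.2, hp.1⟩)
    · exact (la_logb_cont hC).comp (f := fun p : ℂ × ℂ => p.1) continuous_fst.continuousOn (fun p hp => hp.1)
  · intro z hz w hw
    have h1 := la_ne_of_re (la_subB (hC.neg z hz).le)
    have h2 : z - laB ≠ 0 := by rw [← neg_sub]; exact neg_ne_zero.2 h1
    rw [Complex.exp_add, hLe w hw z hz, Complex.exp_log h1]
    field_simp
    ring
  · intro w hw
    refine (hLl w hw).congr (fun z => ?_)
    ring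

/-- facts on the ray -/
lemma la_ray {s : ℝ → ℂ} (hs : ContinuousOn s (Icc 0 1)) (hre : ∀ u ∈ Icc (0:ℝ) 1, (s u).re ≤ 0)
    (h1 : s 1 = 0) :
    IsClosed (AboveRay s) ∧ IsPreconnected (AboveRay s) ∧ ¬ Bornology.IsBounded (AboveRay s) := by
  have hcpt : IsCompact (s '' Icc 0 1) := isCompact_Icc.image_of_continuousOn hs
  refine ⟨?_, ?_, ?_⟩
  · exact hcpt.isClosed.union (Complex.isometry_ofReal.isClosedEmbedding.isClosedMap _ isClosed_Ici)
  · refine IsPreconnected.union 0 ⟨1, by simp, h1⟩ ⟨0, by simp, by simp⟩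
      (isPreconnected_Icc.image _ hs) (isPreconnected_Ici.image _ Complex.continuous_ofReal.continuousOn)
  · intro h
    obtain ⟨R, hR⟩ := h.subset_closedBall 0
    have : ((|R| + 1 : ℝ) : ℂ) ∈ AboveRay s := Or.inr ⟨_, by simp; positivity, rfl⟩
    have h2 := hR this
    rw [mem_closedBall_zero_iff, Complex.norm_real, Real.norm_eq_abs] at h2
    have := le_abs_self R
    have := le_abs_self (|R| + 1)
    linarith

lemma la_rayLog {s : ℝ → ℂ} (hs : ContinuousOn s (Icc 0 1)) (hre : ∀ u ∈ Icc (0:ℝ) 1, (s u).re ≤ 0)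
    {z : ℂ} (hz0 : z.re < 0) (hz : ∀ u ∈ Icc (0:ℝ) 1, z.re < (s u).re) :
    ContinuousOn (fun w => Complex.log (w - z) - Complex.log (laB - w) + Real.pi * Complex.I) (AboveRay s) ∧
    (∀ w ∈ AboveRay s, Complex.exp (Complex.log (w - z) - Complex.log (laB - w) + Real.pi * Complex.I)
      = (w - z) / (w - laB)) ∧
    Tendsto (fun w => Complex.log (w - z) - Complex.log (laB - w) + Real.pi * Complex.I)
      (Bornology.cobounded ℂ ⊓ 𝓟 (AboveRay s)) (𝓝 0) := by
  have hzR : ∀ w ∈ AboveRay s, 0 < (w - z).re := by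
    rintro w (⟨u, hu, rfl⟩ | ⟨r, hr, rfl⟩)
    · simpa using hz u hu
    · have : 0 ≤ r := hr
      simp; linarith
  have hbR : ∀ w ∈ AboveRay s, laB - w ∈ Complex.slitPlane := by
    rintro w (⟨u, hu, rfl⟩ | ⟨r, hr, rfl⟩)
    · exact Or.inl (la_subB (hre u hu))
    · right
      simp [laB_im, Real.pi_ne_zero]
  refine ⟨?_, ?_, ?_⟩
  · apply ContinuousOn.add _ continuousOn_const
    apply ContinuousOn.sub
    · exact ContinuousOn.clog (by fun_prop) (fun w hw => Or.inl (hzR w hw))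
    · exact ContinuousOn.clog (by fun_prop) hbR
  · intro w hw
    have h1 := la_ne_of_re (hzR w hw)
    have h2 := Complex.slitPlane_ne_zero (hbR w hw)
    have h3 : w - laB ≠ 0 := by rw [← neg_sub]; exact neg_ne_zero.2 h2
    rw [Complex.exp_add, Complex.exp_sub, Complex.exp_log h1, Complex.exp_log h2, Complex.exp_pi_mul_I]
    field_simp
    ring
  · have h1 := (la_tendsto_log_ratio z laB).mono_left (inf_le_left (b := 𝓟 (AboveRay s)))
    refine h1.congr' ?_
    have hcpt : IsCompact (s '' Icc 0 1) := isCompact_Icc.image_of_continuousOn hs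
    have e1 : ∀ᶠ w in Bornology.cobounded ℂ ⊓ 𝓟 (AboveRay s), w ∉ s '' Icc 0 1 := by
      have h := Metric.cobounded_le_cocompact hcpt.compl_mem_cocompact
      exact Filter.Eventually.filter_mono inf_le_left h
    have e2 : ∀ᶠ w in Bornology.cobounded ℂ ⊓ 𝓟 (AboveRay s), w ∉ closedBall (0:ℂ) 1 := by
      have h := Metric.cobounded_le_cocompact (isCompact_closedBall (0:ℂ) 1).compl_mem_cocompact
      exact Filter.Eventually.filter_mono inf_le_left h
    have e3 : ∀ᶠ w in Bornology.cobounded ℂ ⊓ 𝓟 (AboveRay s), w ∈ AboveRay s :=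
      Filter.Eventually.filter_mono inf_le_right (eventually_principal.2 (fun _ h => h))
    filter_upwards [e1, e2, e3] with w hw1 hw2 hw3
    obtain ⟨r, hr, rfl⟩ := hw3.resolve_left hw1
    have hr0 : 0 ≤ r := hr
    have hr1 : 1 < r := by
      rw [mem_closedBall_zero_iff, Complex.norm_real, Real.norm_eq_abs, abs_of_nonneg hr0] at hw2
      linarith
    have h4 : (0:ℝ) < ((r:ℂ) - laB).re := by simp [laB_re]; linarith
    rw [la_log_div (hzR _ hw3) h4]
    have h5 := la_log_neg (x := (r:ℂ) - laB) (by simp [laB_im, Real.pi_pos])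
    rw [neg_sub] at h5
    rw [h5]; ring

lemma la_PQ {C D : Set ℂ} (hC : LaGood C) (hD : LaGood D)
    {Λ Λ' : ℂ → ℂ → ℂ} (hP : LaP C D Λ) (hQ : LaQ C D Λ') {d : ℂ} (hd : d ∈ D)
    (hlim : Tendsto (fun z => Λ z d - Complex.log (d - z)) (laLeft C) (𝓝 0)) : LaQ C D Λ := by
  have hne := laLeft_neBot hC.left
  have h1 : Tendsto (fun z => Λ z d - Λ' z d) (laLeft C) (𝓝 0) := by
    have := (hlim.add (la_log_diff C d laB)).sub ((hQ.lim d hd).mono_left (laLeft_le C))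
    simp only [add_zero, sub_zero] at this
    refine this.congr (fun z => ?_)
    ring
  have h2 : ∀ z ∈ C, ∀ w ∈ D, Λ z w = Λ' z w := by
    intro z hz w hw
    have h3 : Tendsto (fun _ : ℂ => Λ z w - Λ' z w) (laLeft C) (𝓝 0) := by
      refine h1.congr' ?_
      filter_upwards [laLeft_mem C] with z' hz'
      exact la_const (hC.conn.prod hD.conn) (f := fun p : ℂ × ℂ => Λ p.1 p.2)
        (g := fun p : ℂ × ℂ => Λ' p.1 p.2) hP.cont hQ.cont
        (fun p hp => by rw [hP.exp _ hp.1 _ hp.2, hQ.exp _ hp.1 _ hp.2])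
        (x := (z', d)) (y := (z, w)) ⟨hz', hd⟩ ⟨hz, hw⟩
    exact sub_eq_zero.1 (tendsto_nhds_unique tendsto_const_nhds h3)
  refine ⟨hP.cont, hP.exp, fun w hw => ?_⟩
  refine (hQ.lim w hw).congr' ?_
  have e3 : ∀ᶠ w in Bornology.cobounded ℂ ⊓ 𝓟 C, w ∈ C :=
      Filter.Eventually.filter_mono inf_le_right (eventually_principal.2 (fun _ h => h))
  filter_upwards [e3] with z hz
  rw [h2 z hz w hw]

/-- Lemma I -/
lemma la_I {C D : Set ℂ} (hC : LaGood C) (hD : LaGood D) (hCD : Disjoint C D)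
    (hA : LiesAbove C D) : ∃ Λ, LaP C D Λ ∧ LaQ C D Λ := by
  obtain ⟨s, ⟨hs, hs2, hsD, hs1⟩, -, hvia⟩ := hA
  obtain ⟨Λ, hP⟩ := la_existsP hD hCD
  obtain ⟨Λ', hQ⟩ := la_existsQ hC hCD
  refine ⟨Λ, hP, la_PQ hC hD hP hQ hsD ?_⟩
  have hre : ∀ u ∈ Icc (0:ℝ) 1, (s u).re ≤ 0 := fun u hu => (hs2 u hu).1
  obtain ⟨hRcl, hRc, hRub⟩ := la_ray hs hre hs1
  obtain ⟨u0, hu0, hmin⟩ := isCompact_Icc.exists_isMinOn (nonempty_Icc.2 zero_le_one)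
    (Complex.continuous_re.comp_continuousOn hs)
  refine tendsto_const_nhds.congr' ?_
  filter_upwards [laLeft_mem C, laLeft_lt C (s u0).re] with z hz hzm
  have hzs : ∀ u ∈ Icc (0:ℝ) 1, z.re < (s u).re := fun u hu => hzm.trans_le (hmin hu)
  obtain ⟨c1, c2, c3⟩ := la_rayLog hs hre (hC.neg z hz) hzs
  obtain ⟨L, hL1, hL2, hL3⟩ := la_T4 (hD.closed.union hRcl) (hvia hz)
  have hnD := la_neBot (la_unbdd hD.left)
  have hnR := la_neBot hRub
  have hdR : s 0 ∈ AboveRay s := Or.inl ⟨0, by simp, rfl⟩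
  have k1 : L (s 0) = Λ z (s 0) - Complex.log (laB - s 0) + Real.pi * Complex.I := by
    refine la_unique hD.conn (l := Bornology.cobounded ℂ ⊓ 𝓟 D) inf_le_right (f := L)
      (g := fun w => Λ z w - Complex.log (laB - w) + Real.pi * Complex.I) (hL1.mono subset_union_left) ?_ ?_ ?_ hsD
    · refine ((hP.cont.comp (f := fun w : ℂ => (z, w)) (by fun_prop) (fun w hw => ⟨hz, hw⟩)).sub
        (la_logb_cont hD)).add continuousOn_const
    · intro w hw
      have h1 := la_ne_of_re (la_subB (hD.neg w hw).le)
      have h2 : w - laB ≠ 0 := by rw [← neg_sub]; exact neg_ne_zero.2 h1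
      rw [hL2 w (Or.inl hw), Complex.exp_add, Complex.exp_sub, hP.exp z hz w hw, Complex.exp_log h1,
        Complex.exp_pi_mul_I]
      change (w - z) / (w - laB) = _
      field_simp
      ring
    · have := (hL3.mono_left (inf_le_inf_left _ (principal_mono.2 subset_union_left))).sub (hP.lim z hz)
      simpa using this
  have k2 : L (s 0) = Complex.log (s 0 - z) - Complex.log (laB - s 0) + Real.pi * Complex.I := by
    refine la_unique hRc (l := Bornology.cobounded ℂ ⊓ 𝓟 (AboveRay s)) inf_le_right (f := L)
      (g := fun w => Complex.log (w - z) - Complex.log (laB - w) + Real.pi * Complex.I)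
      (hL1.mono subset_union_right) c1 ?_ ?_ hdR
    · intro w hw
      rw [hL2 w (Or.inr hw), c2 w hw]
      rfl
    · have := (hL3.mono_left (inf_le_inf_left _ (principal_mono.2 subset_union_right))).sub c3
      simpa using this
  linear_combination k1 - k2

/-- a path as in the definition, meeting `D` only at the start -/
lemma la_path {C D : Set ℂ} (hC : LaGood C) (hD : LaGood D) (hCD : Disjoint C D) :
    ∃ s : ℝ → ℂ, AbovePath C D s ∧ ∀ u ∈ Icc (0:ℝ) 1, s u ∈ D → s u = s 0 := by
  obtain ⟨d0, hd0, -⟩ := hD.left 0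
  have hpos : ∀ z : ℂ, 0 ≤ z.re → z ∉ C := fun z hz h => absurd (hC.neg z h) (not_lt.2 hz)
  have h0 : (0:ℂ) ∈ Cᶜ := hpos 0 (by simp)
  have hpc : IsPathConnected Cᶜ :=
    (hC.closed.isOpen_compl.isConnected_iff_isPathConnected).1 ⟨⟨0, h0⟩, hC.compl⟩
  obtain ⟨γ, hγ⟩ := hpc.joinedIn d0 (hCD.subset_compl_left hd0) 0 h0
  set σ : ℝ → ℂ := fun u => ((min (γ.extend u).re 0 : ℝ) : ℂ) + (γ.extend u).im * Complex.I with hσ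
  have hσc : Continuous σ := by
    have := γ.continuous_extend
    fun_prop
  have hσre : ∀ u, (σ u).re = min (γ.extend u).re 0 := by intro u; simp [hσ]
  have hσeq : ∀ u, (γ.extend u).re ≤ 0 → σ u = γ.extend u := by
    intro u hu
    simp only [hσ, min_eq_left hu, Complex.re_add_im]
  have hγC : ∀ u, γ.extend u ∉ C := by
    intro u
    have : γ.extend u ∈ range γ := by rw [← γ.extend_range]; exact ⟨u, rfl⟩
    obtain ⟨v, hv⟩ := this
    rw [← hv]; exact hγ v
  have hσC : ∀ u, σ u ∉ C := by
    intro u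
    by_cases h : (γ.extend u).re ≤ 0
    · rw [hσeq u h]; exact hγC u
    · apply hpos
      rw [hσre, min_eq_right (by linarith)]
  have hσ0 : σ 0 = d0 := by
    rw [hσeq 0 (by simp; exact (hD.neg d0 hd0).le)]; simp
  have hσ1 : σ 1 = 0 := by rw [hσeq 1 (by simp)]; simp
  have hT : IsCompact (Icc (0:ℝ) 1 ∩ σ ⁻¹' D) := isCompact_Icc.inter_right (hD.closed.preimage hσc)
  obtain ⟨u0, ⟨hu0, hu0D⟩, hmax⟩ := hT.exists_isGreatest ⟨0, by simp, by simpa [hσ0] using hd0⟩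
  refine ⟨fun u => σ (u0 + (1 - u0) * u), ⟨?_, ?_, ?_, ?_⟩, ?_⟩
  · exact (hσc.comp (by fun_prop)).continuousOn
  · intro u hu
    refine ⟨?_, hσC _⟩
    rw [hσre]; exact min_le_right _ _
  · simpa using hu0D
  · simp [hσ1]
  · intro u hu huD
    have h1 : 0 ≤ (1 - u0) * u := mul_nonneg (by linarith [hu0.2]) hu.1
    have h2 : (1 - u0) * u ≤ 1 - u0 := mul_le_of_le_one_right (by linarith [hu0.2]) hu.2
    have h3 := hmax ⟨⟨by linarith [hu0.1], by linarith⟩, huD⟩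
    have h4 : (1 - u0) * u = 0 := le_antisymm (by linarith) h1
    simp only [h4, mul_zero]

/-- Lemma IV -/
lemma la_IV {C D : Set ℂ} (hC : LaGood C) (hD : LaGood D) (hCD : Disjoint C D)
    {Λ : ℂ → ℂ → ℂ} (hP : LaP C D Λ) (hQ : LaQ C D Λ) : LiesAbove C D := by
  classical
  obtain ⟨s, hs, hsd⟩ := la_path hC hD hCD
  refine ⟨s, hs, ?_⟩
  obtain ⟨hs, hs2, hsD, hs1⟩ := hs
  have hre : ∀ u ∈ Icc (0:ℝ) 1, (s u).re ≤ 0 := fun u hu => (hs2 u hu).1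
  obtain ⟨hRcl, hRc, hRub⟩ := la_ray hs hre hs1
  obtain ⟨u0, hu0, hmin⟩ := isCompact_Icc.exists_isMinOn (nonempty_Icc.2 zero_le_one)
    (Complex.continuous_re.comp_continuousOn hs)
  set d := s 0 with hd
  have hne := laLeft_neBot hC.left
  -- choose z
  have hlim : Tendsto (fun z => Λ z d - Complex.log (d - z)) (laLeft C) (𝓝 0) := by
    have := ((hQ.lim d hsD).mono_left (laLeft_le C)).sub (la_log_diff C d laB)
    simp only [sub_zero] at this
    refine this.congr (fun z => ?_)
    ring
  have hev : ∀ᶠ z in laLeft C, ‖Λ z d - Complex.log (d - z)‖ < 1 := by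
    have := hlim.eventually (Metric.ball_mem_nhds 0 one_pos)
    simpa [mem_ball_zero_iff] using this
  obtain ⟨z, hz, hzm, hzd, hzn⟩ := ((laLeft_mem C).and ((laLeft_lt C (s u0).re).and
    ((laLeft_lt C d.re).and hev))).exists
  have hzeq : Λ z d = Complex.log (d - z) := by
    have h1 : Complex.exp (Λ z d) = Complex.exp (Complex.log (d - z)) := by
      rw [hP.exp z hz d hsD, Complex.exp_log (la_ne_of_re (by simpa using hzd))]
    obtain ⟨n, hn⟩ := Complex.exp_eq_exp_iff_exists_int.1 h1
    rw [hn] at hzn ⊢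
    rw [add_sub_cancel_left] at hzn
    have h2 : ‖(n : ℂ) * (2 * Real.pi * Complex.I)‖ = |(n:ℝ)| * (2 * Real.pi) := by
      simp [abs_of_pos Real.pi_pos]
    rw [h2] at hzn
    have h3 : n = 0 := by
      by_contra h
      have : (1:ℝ) ≤ |(n:ℝ)| := by exact_mod_cast Int.one_le_abs h
      nlinarith [Real.pi_gt_three]
    simp [h3]
  have hzs : ∀ u ∈ Icc (0:ℝ) 1, z.re < (s u).re := fun u hu => hzm.trans_le (hmin hu)
  obtain ⟨c1, c2, c3⟩ := la_rayLog hs hre (hC.neg z hz) hzs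
  have hCE : ∀ c ∈ C, c ∉ D ∪ AboveRay s := by
    rintro c hc (h | ⟨u, hu, rfl⟩ | ⟨r, hr, rfl⟩)
    · exact disjoint_left.1 hCD hc h
    · exact (hs2 u hu).2 hc
    · have := hC.neg _ hc
      have hr' : (0:ℝ) ≤ r := hr
      simp at this; linarith
  have hbE : laB ∉ D ∪ AboveRay s := by
    rintro (h | ⟨u, hu, h⟩ | ⟨r, hr, h⟩)
    · have := hD.neg _ h; rw [laB_re] at this; linarith
    · have := hre u hu; rw [h, laB_re] at this; linarith
    · have := congrArg Complex.im h
      rw [laB_im] at this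
      simp at this
  set fD : ℂ → ℂ := fun w => Λ z w - Complex.log (laB - w) + Real.pi * Complex.I with hfD
  set fR : ℂ → ℂ := fun w => Complex.log (w - z) - Complex.log (laB - w) + Real.pi * Complex.I with hfR
  set L : ℂ → ℂ := fun w => if w ∈ D then fD w else fR w with hL
  have hLD : ∀ w ∈ D, L w = fD w := fun w hw => by simp only [hL, if_pos hw]
  have hLR : ∀ w ∈ AboveRay s, L w = fR w := by
    intro w hw
    by_cases h : w ∈ D
    · rw [hLD w h]
      have : w = d := by
        rcases hw with ⟨u, hu, rfl⟩ | ⟨r, hr, rfl⟩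
        · exact hsd u hu h
        · have := hD.neg _ h
          have hr' : (0:ℝ) ≤ r := hr
          simp at this; linarith
      rw [this]
      simp only [hfD, hfR, hzeq]
    · simp only [hL, if_neg h]
  have hcD : ContinuousOn fD D :=
    ((hP.cont.comp (f := fun w : ℂ => (z, w)) (by fun_prop) (fun w hw => ⟨hz, hw⟩)).sub
        (la_logb_cont hD)).add continuousOn_const
  have hLc : ContinuousOn L (D ∪ AboveRay s) :=
    (hcD.congr hLD).union_of_isClosed (c1.congr hLR) hD.closed hRcl
  have hLe : ∀ w ∈ D ∪ AboveRay s, Complex.exp (L w) = (w - z) / (w - laB) := by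
    rintro w (hw | hw)
    · rw [hLD w hw]
      have h1 := la_ne_of_re (la_subB (hD.neg w hw).le)
      have h2 : w - laB ≠ 0 := by rw [← neg_sub]; exact neg_ne_zero.2 h1
      simp only [hfD]
      rw [Complex.exp_add, Complex.exp_sub, hP.exp z hz w hw, Complex.exp_log h1,
        Complex.exp_pi_mul_I]
      field_simp
      ring
    · rw [hLR w hw]; exact c2 w hw
  have hLl : Tendsto L (Bornology.cobounded ℂ ⊓ 𝓟 (D ∪ AboveRay s)) (𝓝 0) := by
    rw [← sup_principal, inf_sup_left, tendsto_sup]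
    constructor
    · refine (hP.lim z hz).congr' ?_
      filter_upwards [mem_inf_of_right (mem_principal_self D)] with w hw using (hLD w hw).symm
    · refine c3.congr' ?_
      filter_upwards [mem_inf_of_right (mem_principal_self (AboveRay s))] with w hw using (hLR w hw).symm
  have key := la_T3 (hD.closed.union hRcl) (hCE z hz) hbE hLc hLe hLl
  have hsub : C ⊆ connectedComponentIn (D ∪ AboveRay s)ᶜ laB := by
    rw [connectedComponentIn_eq key]
    exact hC.conn.subset_connectedComponentIn hz hCE
  exact ⟨fun h => la_unbdd hC.left (h.subset hsub), hsub⟩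

lemma la_U_facts {K : Set ℂ} (hK : IsCompact K) (hb : (unbddComp K)ᶜ ⊆ ball 0 1) :
    IsOpen (unbddComp K) ∧ IsPreconnected (unbddComp K) ∧ K ⊆ (unbddComp K)ᶜ ∧
      frontier (unbddComp K) ⊆ K := by
  have hKo : IsOpen Kᶜ := hK.isClosed.isOpen_compl
  have hsub : ∀ z ∈ unbddComp K, connectedComponentIn Kᶜ z ⊆ unbddComp K := by
    intro z hz w hw
    refine ⟨connectedComponentIn_subset _ _ hw, ?_⟩
    rw [← connectedComponentIn_eq hw]; exact hz.2
  have hop : IsOpen (unbddComp K) := by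
    rw [isOpen_iff_mem_nhds]
    intro z hz
    exact mem_of_superset (hKo.connectedComponentIn.mem_nhds (mem_connectedComponentIn hz.1)) (hsub z hz)
  have hT : {w : ℂ | 1 ≤ ‖w‖} ⊆ unbddComp K := by
    intro w hw
    by_contra h
    have := hb h
    rw [mem_ball_zero_iff] at this
    exact absurd this (not_lt.2 hw)
  have hTc : IsPreconnected {w : ℂ | 1 ≤ ‖w‖} := by
    have h1 : IsPreconnected (Complex.exp '' {z : ℂ | 0 ≤ z.re}) :=
      (convex_halfSpace_re_ge 0).isPreconnected.image _ Complex.continuous_exp.continuousOn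
    convert h1 using 1
    ext w
    constructor
    · intro hw
      have hw1 : 1 ≤ ‖w‖ := hw
      have hw0 : w ≠ 0 := norm_pos_iff.1 (by linarith)
      refine ⟨Complex.log w, ?_, Complex.exp_log hw0⟩
      show 0 ≤ (Complex.log w).re
      rw [Complex.log_re]
      exact Real.log_nonneg hw1
    · rintro ⟨z, hz, rfl⟩
      show 1 ≤ ‖Complex.exp z‖
      rw [Complex.norm_exp]
      exact Real.one_le_exp hz
  refine ⟨hop, ?_, fun z hz h => h.1 hz, ?_⟩
  · refine isPreconnected_of_forall 1 (fun z hz => ?_)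
    have hnot : ¬ connectedComponentIn Kᶜ z ⊆ ball 0 1 := fun h => hz.2 (isBounded_ball.subset h)
    obtain ⟨p, hp, hp2⟩ := not_subset.1 hnot
    refine ⟨connectedComponentIn Kᶜ z ∪ {w : ℂ | 1 ≤ ‖w‖}, union_subset (hsub z hz) hT,
      Or.inr (by simp), Or.inl (mem_connectedComponentIn hz.1), ?_⟩
    refine IsPreconnected.union p hp ?_ isPreconnected_connectedComponentIn hTc
    rw [mem_ball_zero_iff, not_lt] at hp2
    exact hp2
  · intro p hp
    by_contra hpK
    obtain ⟨w, hw1, hw2⟩ := mem_closure_iff.1 hp.1 _ hKo.connectedComponentIn (mem_connectedComponentIn hpK)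
    have : p ∈ unbddComp K := by
      refine ⟨hpK, ?_⟩
      rw [connectedComponentIn_eq hw1]; exact hw2.2
    rw [hop.frontier_eq] at hp
    exact hp.2 this

lemma la_inv {S : Set ℂ} (hS : IsCompact S) {f G : ℂ → ℂ} (hf : ContinuousOn f S) (hi : InjOn f S)
    (hG : ContinuousOn G S) :
    ∃ G' : ℂ → ℂ, ContinuousOn G' (f '' S) ∧ ∀ x ∈ S, G' (f x) = G x := by
  have hval : ∀ x ∈ S, G (Function.invFunOn f S (f x)) = G x := by
    intro x hx
    rw [hi.leftInvOn_invFunOn hx]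
  refine ⟨fun v => G (Function.invFunOn f S v), ?_, hval⟩
  rw [continuousOn_iff_isClosed]
  intro T hT
  obtain ⟨u, hu, huT⟩ := continuousOn_iff_isClosed.1 hG T hT
  refine ⟨f '' (S ∩ u), ?_, ?_⟩
  · exact ((hS.inter_right hu).image_of_continuousOn (hf.mono inter_subset_left)).isClosed
  · ext v
    constructor
    · rintro ⟨h1, x, hx, rfl⟩
      refine ⟨⟨x, ⟨hx, ?_⟩, rfl⟩, ⟨x, hx, rfl⟩⟩
      have : x ∈ G ⁻¹' T ∩ S := ⟨by simpa [hval x hx] using h1, hx⟩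
      rw [huT] at this; exact this.1
    · rintro ⟨⟨x, ⟨hx, hxu⟩, rfl⟩, h2⟩
      refine ⟨?_, h2⟩
      have : x ∈ u ∩ S := ⟨hxu, hx⟩
      rw [← huT] at this
      simpa [hval x hx] using this.1

lemma la_logsub {S : Set ℂ} (hS : IsCompact S) (hSb : S ⊆ ball 0 1) {p : ℂ}
    (hp : p ∈ connectedComponentIn Sᶜ 2) :
    ∃ ℓ : ℂ → ℂ, ContinuousOn ℓ S ∧ ∀ w ∈ S, Complex.exp (ℓ w) = w - p := by
  obtain ⟨L, hLc, hLe, -⟩ := la_T4 hS.isClosed hp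
  have hre : ∀ w ∈ S, 0 < (2 - w).re := by
    intro w hw
    have h1 := hSb hw
    rw [mem_ball_zero_iff] at h1
    have := Complex.abs_re_le_norm w
    have := le_abs_self w.re
    simp
    linarith
  refine ⟨fun w => L w + Complex.log (2 - w) + Real.pi * Complex.I, ?_, ?_⟩
  · apply ContinuousOn.add _ continuousOn_const
    apply hLc.add
    apply ContinuousOn.clog (by fun_prop)
    intro w hw
    exact Or.inl (hre w hw)
  · intro w hw
    have h1 : (2 - w) ≠ 0 := la_ne_of_re (hre w hw)
    have h2 : w - 2 ≠ 0 := by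
      intro h; apply h1; linear_combination -h
    rw [Complex.exp_add, Complex.exp_add, hLe w hw, Complex.exp_log h1, Complex.exp_pi_mul_I]
    field_simp
    ring

lemma la_slice {A : Set ℂ} {h : ℂ → ℝ → ℂ}
    (hcont : ContinuousOn (fun p : ℂ × ℝ => h p.1 p.2) (A ×ˢ Icc 0 1)) {t : ℝ} (ht : t ∈ Icc (0:ℝ) 1) :
    ContinuousOn (fun z => h z t) A :=
  hcont.comp (f := fun z : ℂ => (z, t)) (by fun_prop) (fun _ hz => ⟨hz, ht⟩)

lemma la_slice' {A : Set ℂ} {h : ℂ → ℝ → ℂ}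
    (hcont : ContinuousOn (fun p : ℂ × ℝ => h p.1 p.2) (A ×ˢ Icc 0 1)) {z : ℂ} (hz : z ∈ A) :
    ContinuousOn (fun t => h z t) (Icc 0 1) :=
  hcont.comp (f := fun t : ℝ => (z, t)) (by fun_prop) (fun _ ht => ⟨hz, ht⟩)

/-- all points of the moved boundary remain accessible in the limit from outside -/
lemma la_bd_closure {X : Set ℂ} (hXcpt : IsCompact X)
    (hXns : IsPreconnected Xᶜ) (hXb : X ⊆ ball 0 1)
    {h : ℂ → ℝ → ℂ}
    (hcont : ContinuousOn (fun p : ℂ × ℝ => h p.1 p.2) (frontier X ×ˢ Icc 0 1))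
    (hinj : ∀ t ∈ Icc (0:ℝ) 1, InjOn (fun z => h z t) (frontier X))
    (hid : ∀ z ∈ frontier X, h z 0 = z) {t : ℝ} (ht : t ∈ Icc (0:ℝ) 1)
    (hXtb : XtSet h X t ⊆ ball 0 1) {p : ℂ} (hp : p ∈ frontier X) :
    h p t ∈ closure (unbddComp ((fun z => h z t) '' frontier X)) := by
  have hfX : frontier X ⊆ X := hXcpt.isClosed.frontier_subset
  have hK : IsCompact (frontier X) := hXcpt.of_isClosed_subset isClosed_frontier hfX
  have hct := la_slice hcont ht
  have hKt : IsCompact ((fun z => h z t) '' frontier X) := hK.image_of_continuousOn hct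
  obtain ⟨hUo, hUc, hKU, hfU⟩ := la_U_facts hKt hXtb
  set U := unbddComp ((fun z => h z t) '' frontier X) with hU
  rw [Metric.mem_closure_iff]
  by_contra hcon
  push Not at hcon
  obtain ⟨δ, hδ, hδU⟩ := hcon
  obtain ⟨ε, hε, hεδ⟩ := Metric.continuousOn_iff.1 hct p hp δ hδ
  set S := frontier X ∩ (ball p ε)ᶜ with hS
  have hScpt : IsCompact S := hK.inter_right isOpen_ball.isClosed_compl
  have hSf : S ⊆ frontier X := inter_subset_left
  have hpS : p ∉ S := fun h => h.2 (mem_ball_self hε)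
  have hp2 : p ∈ connectedComponentIn Sᶜ 2 := by
    have h1 : p ∈ closure Xᶜ := by
      rw [frontier_eq_closure_inter_closure] at hp; exact hp.2
    have h2 : IsPreconnected (insert p Xᶜ) :=
      hXns.subset_closure (subset_insert _ _) (insert_subset h1 subset_closure)
    refine h2.subset_connectedComponentIn (F := Sᶜ) (x := 2) ?_ ?_ (mem_insert _ _)
    · right
      intro h
      have := hXb h
      norm_num [mem_ball_zero_iff] at this
    · rintro z (rfl | hz)
      · exact hpS
      · exact fun h => hz (hfX h.1)
  obtain ⟨ℓ, hℓc, hℓe⟩ := la_logsub hScpt (hSf.trans (hfX.trans hXb)) hp2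
  have h01 : (0:ℝ) ∈ Icc (0:ℝ) 1 := by simp
  obtain ⟨G, hG1, hG2, -⟩ := la_homotopy (S := S) (F := fun w s => h w s - h p s)
    (by
      apply ContinuousOn.sub
      · exact hcont.mono (prod_mono hSf subset_rfl)
      · exact (la_slice' hcont hp).comp (f := fun q : ℂ × ℝ => q.2) (by fun_prop) (fun q hq => hq.2))
    (by
      intro w hw s hs h0
      have := hinj s hs (hSf hw) hp (sub_eq_zero.1 h0)
      rw [this] at hw
      exact hpS hw) hℓc (by
      intro w hw
      rw [hℓe w hw, hid w (hSf hw), hid p hp])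
  obtain ⟨G', hG'c, hG'e⟩ := la_inv hScpt (f := fun z => h z t) (G := fun z => G z t)
    (hct.mono hSf) ((hinj t ht).mono hSf) (la_slice hG1 ht)
  have hScpt' : IsCompact ((fun z => h z t) '' S) := hScpt.image_of_continuousOn (hct.mono hSf)
  have hpS' : h p t ∉ (fun z => h z t) '' S := by
    rintro ⟨w, hw, hwp⟩
    have := hinj t ht (hSf hw) hp hwp
    rw [this] at hw
    exact hpS hw
  have key := la_T2 hScpt' hpS' hG'c (by
    rintro _ ⟨w, hw, rfl⟩
    rw [hG'e w hw, hG2 w hw t ht])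
  set V := connectedComponentIn ((fun z => h z t) '' S)ᶜ (h p t) with hV
  have hpV : h p t ∈ V := mem_connectedComponentIn hpS'
  obtain ⟨v, hv, hvU⟩ : ∃ v ∈ V, v ∈ U := by
    by_contra hcon
    push Not at hcon
    exact key (isBounded_ball.subset (fun v hv => hXtb (hcon v hv)))
  have hVU : V ⊆ U := by
    refine la_sub_of_frontier isPreconnected_connectedComponentIn ?_ hv hvU
    intro z hz hzf
    obtain ⟨k, hk, rfl⟩ := hfU hzf
    have hkε : k ∈ ball p ε := by
      by_contra hkε
      exact connectedComponentIn_subset _ _ hz ⟨k, ⟨hk, hkε⟩, rfl⟩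
    have h1 := hεδ k hk hkε
    obtain ⟨w, hw1, hw2⟩ := mem_closure_iff.1 hzf.1 (ball (h p t) δ) isOpen_ball h1
    have := hδU w hw2
    rw [dist_comm] at this
    exact absurd hw1 (not_lt.2 this)
  exact hKU ⟨p, hp, rfl⟩ (hVU hpV)

lemma la_hatSet (X : Set ℂ) : hatSet X = Complex.exp ⁻¹' X := by
  ext z; simp [hatSet, Complex.exp_ne_zero]

lemma la_hatXt (h : ℂ → ℝ → ℂ) (X : Set ℂ) (t : ℝ) : hatXt h X t = Complex.exp ⁻¹' (XtSet h X t) := by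
  ext z; simp [hatXt, Complex.exp_ne_zero]

lemma la_bdLift (X : Set ℂ) : bdLift X = Complex.exp ⁻¹' (frontier X) := by
  ext z; simp [bdLift, Complex.exp_ne_zero]

lemma la_frontier_hat (Y : Set ℂ) : frontier (Complex.exp ⁻¹' Y) = Complex.exp ⁻¹' (frontier Y) :=
  (Complex.isOpenMap_exp.preimage_frontier_eq_frontier_preimage Complex.continuous_exp Y).symm

lemma la_good {Y : Set ℂ} (hY : IsClosed Y) (h0 : (0:ℂ) ∈ Y) (hYb : Y ⊆ ball 0 1)
    (hc : IsPreconnected Yᶜ) {x : ℂ}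
    (hl : ∀ m : ℝ, ∃ z ∈ connectedComponentIn (Complex.exp ⁻¹' Y) x, z.re < m) :
    LaGood (connectedComponentIn (Complex.exp ⁻¹' Y) x) where
  closed := la_comp_closed (hY.preimage Complex.continuous_exp) x
  conn := isPreconnected_connectedComponentIn
  compl := la_comp_compl (hY.preimage Complex.continuous_exp)
    ⟨0, fun h => by have := la_re_neg hYb h; simp at this⟩ (la_hat_compl hY h0 hYb hc) x
  neg := fun z hz => la_re_neg hYb (connectedComponentIn_subset (Complex.exp ⁻¹' Y) x hz)
  left := hl

lemma la_equivariant {B : Set ℂ} {h H : ℂ → ℝ → ℂ}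
    (hB : ∀ z ∈ B, ∀ n : ℤ, z + n * (2 * Real.pi * Complex.I) ∈ B)
    (hHcont : ContinuousOn (fun p : ℂ × ℝ => H p.1 p.2) (B ×ˢ Icc 0 1))
    (hH0 : ∀ z ∈ B, H z 0 = z)
    (hHlift : ∀ z ∈ B, ∀ t ∈ Icc (0:ℝ) 1, Complex.exp (H z t) = h (Complex.exp z) t)
    {z : ℂ} (hz : z ∈ B) (n : ℤ) {t : ℝ} (ht : t ∈ Icc (0:ℝ) 1) :
    H (z + n * (2 * Real.pi * Complex.I)) t = H z t + n * (2 * Real.pi * Complex.I) := by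
  have := la_const (S := Icc (0:ℝ) 1) isPreconnected_Icc
    (f := fun s => H (z + n * (2 * Real.pi * Complex.I)) s) (g := fun s => H z s)
    (la_slice' hHcont (hB z hz n)) (la_slice' hHcont hz) (by
      intro s hs
      rw [hHlift _ (hB z hz n) s hs, hHlift z hz s hs, Complex.exp_periodic.int_mul n]) ht
      (show (0:ℝ) ∈ Icc (0:ℝ) 1 by simp)
  rw [hH0 _ (hB z hz n), hH0 z hz] at this
  linear_combination this

/-- inverse of the lifted isotopy is continuous -/
lemma la_lift_inv {K : Set ℂ} (hK : IsCompact K) {h H : ℂ → ℝ → ℂ} {t : ℝ} (ht : t ∈ Icc (0:ℝ) 1)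
    (hcont : ContinuousOn (fun p : ℂ × ℝ => h p.1 p.2) (K ×ˢ Icc 0 1))
    (hinj : InjOn (fun z => h z t) K) (h00 : h 0 t = 0)
    (hHcont : ContinuousOn (fun p : ℂ × ℝ => H p.1 p.2) ((Complex.exp ⁻¹' K) ×ˢ Icc 0 1))
    (hHinj : InjOn (fun z => H z t) (Complex.exp ⁻¹' K))
    (hH0 : ∀ z ∈ (Complex.exp ⁻¹' K), H z 0 = z)
    (hHlift : ∀ z ∈ (Complex.exp ⁻¹' K), ∀ t ∈ Icc (0:ℝ) 1, Complex.exp (H z t) = h (Complex.exp z) t) :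
    ∃ I : ℂ → ℂ, ContinuousOn I (Complex.exp ⁻¹' ((fun z => h z t) '' K)) ∧
      (∀ v ∈ Complex.exp ⁻¹' ((fun z => h z t) '' K), I v ∈ Complex.exp ⁻¹' K) ∧
      ∀ z ∈ Complex.exp ⁻¹' K, I (H z t) = z := by
  set B := Complex.exp ⁻¹' K with hBdef
  set M := Complex.exp ⁻¹' ((fun z => h z t) '' K) with hM
  have hB : ∀ z ∈ B, ∀ n : ℤ, z + n * (2 * Real.pi * Complex.I) ∈ B := by
    intro z hz n
    rw [hBdef, mem_preimage, Complex.exp_periodic.int_mul n]; exact hz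
  obtain ⟨k, hkc, hke⟩ := la_inv hK (la_slice hcont ht) hinj (G := id) continuousOn_id
  simp only [id] at hke
  have hkM : ∀ v ∈ M, k (Complex.exp v) ∈ K ∧ h (k (Complex.exp v)) t = Complex.exp v ∧
      k (Complex.exp v) ≠ 0 := by
    rintro v ⟨x, hx, hxv⟩
    simp only at hxv
    rw [← hxv, hke x hx]
    refine ⟨hx, rfl, ?_⟩
    rintro rfl
    rw [h00] at hxv
    exact Complex.exp_ne_zero v hxv.symm
  have hkcM : ContinuousOn (fun v => k (Complex.exp v)) M :=
    hkc.comp Complex.continuous_exp.continuousOn (fun v hv => hv)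
  have hsurj : ∀ v ∈ M, ∃ z ∈ B, H z t = v := by
    intro v hv
    obtain ⟨h1, h2, h3⟩ := hkM v hv
    have hz : Complex.log (k (Complex.exp v)) ∈ B := by
      rw [hBdef, mem_preimage, Complex.exp_log h3]; exact h1
    have h4 := hHlift _ hz t ht
    rw [Complex.exp_log h3, h2] at h4
    obtain ⟨n, hn⟩ := Complex.exp_eq_exp_iff_exists_int.1 h4.symm
    exact ⟨_, hB _ hz n, (la_equivariant hB hHcont hH0 hHlift hz n ht).trans hn.symm⟩
  have hinvl : ∀ z ∈ B, Function.invFunOn (fun z => H z t) B (H z t) = z :=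
    fun z hz => hHinj.leftInvOn_invFunOn hz
  refine ⟨Function.invFunOn (fun z => H z t) B, ?_, ?_, hinvl⟩
  · intro v0 hv0
    obtain ⟨z0, hz0, rfl⟩ := hsurj v0 hv0
    obtain ⟨g1, g2, g3⟩ := hkM _ hv0
    have hk0 : k (Complex.exp (H z0 t)) = Complex.exp z0 := by
      rw [hHlift z0 hz0 t ht]; exact hke _ hz0
    set φ : ℂ → ℂ := fun v => z0 + Complex.log (k (Complex.exp v) / k (Complex.exp (H z0 t))) with hφ
    have hφ0 : φ (H z0 t) = z0 := by simp [hφ, div_self g3]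
    have hφc : ContinuousWithinAt φ M (H z0 t) := by
      refine continuousWithinAt_const.add ?_
      apply ContinuousWithinAt.clog
      · exact (hkcM _ hv0).div_const _
      · rw [div_self g3]; simp
    have hφB : ∀ v ∈ M, Complex.exp (φ v) = k (Complex.exp v) := by
      intro v hv
      simp only [hφ]
      rw [Complex.exp_add, Complex.exp_log (div_ne_zero (hkM v hv).2.2 g3), hk0]
      have := Complex.exp_ne_zero z0
      field_simp
    have hφB' : ∀ v ∈ M, φ v ∈ B := by
      intro v hv
      rw [hBdef, mem_preimage, hφB v hv]; exact (hkM v hv).1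
    have hHφ : ContinuousWithinAt (fun v => H (φ v) t - v) M (H z0 t) := by
      apply ContinuousWithinAt.sub _ continuousWithinAt_id
      have h1 : ContinuousWithinAt (fun z => H z t) B (φ (H z0 t)) := by
        rw [hφ0]; exact la_slice hHcont ht z0 hz0
      exact h1.comp hφc hφB'
    have hev : ∀ᶠ v in 𝓝[M] (H z0 t), ‖H (φ v) t - v‖ < 1 := by
      have h2 : Tendsto (fun v => ‖H (φ v) t - v‖) (𝓝[M] (H z0 t)) (𝓝 0) := by
        have := hHφ.tendsto.norm
        simpa [hφ0] using this
      exact h2.eventually_lt_const one_pos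
    refine hφc.congr_of_eventuallyEq ?_ ?_
    · filter_upwards [hev, self_mem_nhdsWithin] with v hv hvM
      have h3 : Complex.exp (H (φ v) t) = Complex.exp v := by
        rw [hHlift _ (hφB' v hvM) t ht, hφB v hvM, (hkM v hvM).2.1]
      obtain ⟨n, hn⟩ := Complex.exp_eq_exp_iff_exists_int.1 h3
      have h4 : H (φ v) t = v := by
        rw [hn] at hv ⊢
        rw [add_sub_cancel_left] at hv
        have h2 : ‖(n : ℂ) * (2 * Real.pi * Complex.I)‖ = |(n:ℝ)| * (2 * Real.pi) := by
          simp [abs_of_pos Real.pi_pos]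
        rw [h2] at hv
        have h3 : n = 0 := by
          by_contra h
          have : (1:ℝ) ≤ |(n:ℝ)| := by exact_mod_cast Int.one_le_abs h
          nlinarith [Real.pi_gt_three]
        simp [h3]
      have := hinvl _ (hφB' v hvM)
      rwa [h4] at this
    · rw [hφ0]; exact hinvl z0 hz0
  · intro v hv
    obtain ⟨z, hz, rfl⟩ := hsurj v hv
    rw [hinvl z hz]; exact hz

/-- uniform behaviour at the left end -/
lemma la_unif {K : Set ℂ} (hK : IsCompact K) {h H : ℂ → ℝ → ℂ} (h0K : (0:ℂ) ∈ K)
    (hcont : ContinuousOn (fun p : ℂ × ℝ => h p.1 p.2) (K ×ˢ Icc 0 1))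
    (hfix : ∀ t ∈ Icc (0:ℝ) 1, h 0 t = 0)
    (hHlift : ∀ z ∈ (Complex.exp ⁻¹' K), ∀ t ∈ Icc (0:ℝ) 1, Complex.exp (H z t) = h (Complex.exp z) t)
    (m : ℝ) : ∃ m' : ℝ, ∀ w ∈ Complex.exp ⁻¹' K, w.re < m' → ∀ t ∈ Icc (0:ℝ) 1, (H w t).re < m := by
  have huc := (hK.prod (isCompact_Icc (a := (0:ℝ)) (b := 1))).uniformContinuousOn_of_continuous hcont
  obtain ⟨δ, hδ, hd⟩ := Metric.uniformContinuousOn_iff.1 huc (Real.exp m) (Real.exp_pos m)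
  refine ⟨Real.log δ, fun w hw hwm t ht => ?_⟩
  have h1 := hd (Complex.exp w, t) ⟨hw, ht⟩ (0, t) ⟨h0K, ht⟩ (by
    rw [Prod.dist_eq]
    simp only [dist_self, dist_zero_right, Complex.norm_exp]
    rw [max_eq_left (Real.exp_pos _).le]
    exact (Real.lt_log_iff_exp_lt hδ).1 hwm)
  simp only [hfix t ht, dist_zero_right] at h1
  rw [← hHlift w hw t ht, Complex.norm_exp] at h1
  exact Real.exp_lt_exp.1 h1

/-- transport of the normalization -/
lemma la_transport {B A : Set ℂ} {H : ℂ → ℝ → ℂ} (hAB : A ⊆ B)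
    (hHcont : ContinuousOn (fun p : ℂ × ℝ => H p.1 p.2) (B ×ˢ Icc 0 1))
    (hneg : ∀ w ∈ B, ∀ s ∈ Icc (0:ℝ) 1, (H w s).re < 0)
    (hunif : ∀ m : ℝ, ∃ m' : ℝ, ∀ w ∈ B, w.re < m' → ∀ t ∈ Icc (0:ℝ) 1, (H w t).re < m)
    {a : ℂ} (ha : a ∈ B) {γ : ℂ → ℝ → ℂ} (hγc : ∀ w ∈ A, ContinuousOn (γ w) (Icc 0 1))
    (hγe : ∀ w ∈ A, ∀ s ∈ Icc (0:ℝ) 1, Complex.exp (γ w s) = (H w s - H a s) / (H w s - laB))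
    (h0 : Tendsto (fun w => γ w 0) (laLeft A) (𝓝 0)) {t : ℝ} (ht : t ∈ Icc (0:ℝ) 1) :
    Tendsto (fun w => γ w t) (laLeft A) (𝓝 0) := by
  have hleft : ∀ s ∈ Icc (0:ℝ) 1, Tendsto (fun w => H w s) (laLeft A) (Bornology.cobounded ℂ) := by
    intro s hs
    rw [← tendsto_norm_atTop_iff_cobounded]
    rw [Filter.tendsto_atTop]
    intro R
    obtain ⟨m', hm'⟩ := hunif (-R)
    filter_upwards [laLeft_mem A, laLeft_lt A m'] with w hw hwm
    have h1 := hm' w (hAB hw) hwm s hs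
    have := (neg_le_abs _).trans (Complex.abs_re_le_norm (H w s))
    linarith
  have hlog : ∀ s ∈ Icc (0:ℝ) 1, Tendsto (fun w => Complex.log ((H w s - H a s) / (H w s - laB)))
      (laLeft A) (𝓝 0) := fun s hs => (la_tendsto_log_ratio (H a s) laB).comp (hleft s hs)
  have h01 : (0:ℝ) ∈ Icc (0:ℝ) 1 := by simp
  obtain ⟨u0, hu0, hmax⟩ := isCompact_Icc.exists_isMaxOn (nonempty_Icc.2 zero_le_one)
    ((la_slice' hHcont ha).sub (continuousOn_const (c := laB))).norm
  set M := ‖H a u0 - laB‖ with hM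
  obtain ⟨m', hm'⟩ := hunif (-M)
  have hfin := ((h0.sub (hlog 0 h01)).add (hlog t ht))
  simp only [sub_zero, add_zero] at hfin
  refine hfin.congr' ?_
  filter_upwards [laLeft_mem A, laLeft_lt A m'] with w hw hwm
  have hsl : ∀ s ∈ Icc (0:ℝ) 1, (H w s - H a s) / (H w s - laB) ∈ Complex.slitPlane := by
    intro s hs
    apply la_ratio_slit
    have h1 := hm' w (hAB hw) hwm s hs
    have h2 : ‖H a s - laB‖ ≤ M := hmax hs
    have h3 := (neg_le_abs _).trans (Complex.abs_re_le_norm (H w s - laB))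
    rw [Complex.sub_re, laB_re] at h3
    linarith
  have hw' := la_slice' hHcont (hAB hw)
  have hne : ∀ s ∈ Icc (0:ℝ) 1, H w s - laB ≠ 0 := by
    intro s hs h
    have h1 := hneg w (hAB hw) s hs
    have h2 := congrArg Complex.re h
    rw [Complex.sub_re, laB_re] at h2
    simp at h2
    linarith
  have := la_const (S := Icc (0:ℝ) 1) isPreconnected_Icc (f := γ w)
    (g := fun s => Complex.log ((H w s - H a s) / (H w s - laB))) (hγc w hw)
    (ContinuousOn.clog ((hw'.sub (la_slice' hHcont ha)).div (hw'.sub continuousOn_const) hne) hsl)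
    (by
      intro s hs
      rw [hγe w hw s hs, Complex.exp_log (Complex.slitPlane_ne_zero (hsl s hs))]) ht h01
  linear_combination -this

/-- if the component `C` of `X̂⁰` lies above the component `D`, then for
every `t` the component `C^t` of `X̂^t` (the component containing `𝐡^t x` for any
`x ∈ C ∩ exp⁻¹(Bd(X) \ {0})`) lies above `D^t`. -/
theorem liesAbove_preserved
    (X : Set ℂ) (hXne : X.Nonempty) (hXcpt : IsCompact X) (hXconn : IsConnected X)
    (hXns : IsConnected Xᶜ) (h0 : (0:ℂ) ∈ frontier X) (hXb : X ⊆ Metric.ball 0 1)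
    (h : ℂ → ℝ → ℂ)
    (hcont : ContinuousOn (fun p : ℂ × ℝ => h p.1 p.2) (frontier X ×ˢ Set.Icc 0 1))
    (hinj : ∀ t ∈ Set.Icc (0:ℝ) 1, Set.InjOn (fun z => h z t) (frontier X))
    (hid : ∀ z ∈ frontier X, h z 0 = z)
    (hfix : ∀ t ∈ Set.Icc (0:ℝ) 1, h 0 t = 0)
    (hXtb : ∀ t ∈ Set.Icc (0:ℝ) 1, XtSet h X t ⊆ Metric.ball 0 1)
    -- 𝐡 = H, the lift of h with 𝐡⁰ = id :
    (H : ℂ → ℝ → ℂ)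
    (hHcont : ContinuousOn (fun p : ℂ × ℝ => H p.1 p.2) (bdLift X ×ˢ Set.Icc 0 1))
    (hHinj : ∀ t ∈ Set.Icc (0:ℝ) 1, Set.InjOn (fun z => H z t) (bdLift X))
    (hH0 : ∀ z ∈ bdLift X, H z 0 = z)
    (hHlift : ∀ z ∈ bdLift X, ∀ t ∈ Set.Icc (0:ℝ) 1,
      Complex.exp (H z t) = h (Complex.exp z) t)
    (C D : Set ℂ) (hC : C ∈ componentsOf (hatSet X)) (hD : D ∈ componentsOf (hatSet X))
    (hCD : LiesAbove C D) :
    ∀ t ∈ Set.Icc (0:ℝ) 1, ∀ x ∈ C ∩ bdLift X, ∀ y ∈ D ∩ bdLift X,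
      LiesAbove (connectedComponentIn (hatXt h X t) (H x t))
        (connectedComponentIn (hatXt h X t) (H y t)) := by
  intro t ht x hx y hy
  have h01 : (0:ℝ) ∈ Icc (0:ℝ) 1 := by simp
  have hXcl := hXcpt.isClosed
  have hfX : frontier X ⊆ X := hXcl.frontier_subset
  have hK : IsCompact (frontier X) := hXcpt.of_isClosed_subset isClosed_frontier hfX
  have h0X : (0:ℂ) ∈ X := hfX h0
  rw [la_hatXt]
  rw [la_hatSet] at hC hD
  rw [la_bdLift] at hx hy hHcont hHinj hH0 hHlift
  obtain ⟨c0, hc0, hCc⟩ := hC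
  obtain ⟨d0, hd0, hDc⟩ := hD
  -- time zero
  have hZcl : IsClosed (Complex.exp ⁻¹' X) := hXcl.preimage Complex.continuous_exp
  have hPf : frontier C = C ∩ Complex.exp ⁻¹' (frontier X) := by
    rw [hCc, la_comp_frontier hZcl, la_frontier_hat]
  have hQf : frontier D = D ∩ Complex.exp ⁻¹' (frontier X) := by
    rw [hDc, la_comp_frontier hZcl, la_frontier_hat]
  have hPl : ∀ m : ℝ, ∃ z ∈ frontier C, z.re < m := by
    rw [hCc]; exact la_left_frontier hXcpt hXconn.isPreconnected hXns.isPreconnected h0 hXb hc0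
  have hQl : ∀ m : ℝ, ∃ z ∈ frontier D, z.re < m := by
    rw [hDc]; exact la_left_frontier hXcpt hXconn.isPreconnected hXns.isPreconnected h0 hXb hd0
  have hCg : LaGood C := by
    rw [hCc]
    exact la_good hXcl h0X hXb hXns.isPreconnected
      (la_left hXcpt hXconn.isPreconnected hXns.isPreconnected h0 hXb hc0)
  have hDg : LaGood D := by
    rw [hDc]
    exact la_good hXcl h0X hXb hXns.isPreconnected
      (la_left hXcpt hXconn.isPreconnected hXns.isPreconnected h0 hXb hd0)
  have hCD0 : Disjoint C D := by
    rw [disjoint_left]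
    intro w hwC hwD
    obtain ⟨s, ⟨-, hs2, hsD, -⟩, -⟩ := hCD
    apply (hs2 0 h01).2
    rw [hCc] at hwC ⊢
    rw [hDc] at hwD hsD
    rwa [connectedComponentIn_eq hwC, ← connectedComponentIn_eq hwD]
  have hPc : IsPreconnected (frontier C) := la_frontier_conn hCg.closed hCg.conn hCg.compl
  have hQc : IsPreconnected (frontier D) := la_frontier_conn hDg.closed hDg.conn hDg.compl
  set B := Complex.exp ⁻¹' (frontier X) with hB
  set P := frontier C with hP
  set Q := frontier D with hQ
  have hPB : P ⊆ B := by rw [hPf]; exact inter_subset_right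
  have hQB : Q ⊆ B := by rw [hQf]; exact inter_subset_right
  have hPC : P ⊆ C := by rw [hPf]; exact inter_subset_left
  have hQD : Q ⊆ D := by rw [hQf]; exact inter_subset_left
  have hxP : x ∈ P := by rw [hPf]; exact hx
  have hyQ : y ∈ Q := by rw [hQf]; exact hy
  obtain ⟨Λ0, hΛP, hΛQ⟩ := la_I hCg hDg hCD0 hCD
  -- time t
  have hKt : IsCompact ((fun z => h z t) '' frontier X) := hK.image_of_continuousOn (la_slice hcont ht)
  obtain ⟨hUo, hUc, hKU, hfU⟩ := la_U_facts hKt (hXtb t ht)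
  set Y := XtSet h X t with hY
  have hYU : Yᶜ = unbddComp ((fun z => h z t) '' frontier X) := by rw [hY, XtSet, compl_compl]
  have hYcl : IsClosed Y := hUo.isClosed_compl
  have hYfr : frontier Y ⊆ (fun z => h z t) '' frontier X := by
    rw [← frontier_compl, hYU]; exact hfU
  have hKY : (fun z => h z t) '' frontier X ⊆ frontier Y := by
    rintro _ ⟨p, hp, rfl⟩
    rw [frontier_eq_closure_inter_closure]
    refine ⟨subset_closure (hKU ⟨p, hp, rfl⟩), ?_⟩
    rw [hYU]
    exact la_bd_closure hXcpt hXns.isPreconnected hXb hcont hinj hid ht (hXtb t ht) hp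
  have h0Y : (0:ℂ) ∈ Y := hKU ⟨0, h0, hfix t ht⟩
  have hYc : IsPreconnected Yᶜ := by rw [hYU]; exact hUc
  have hneg : ∀ w ∈ B, ∀ s ∈ Icc (0:ℝ) 1, (H w s).re < 0 := by
    intro w hw s hs
    refine la_re_neg (hXtb s hs) ?_
    rw [hHlift w hw s hs]
    intro hh
    exact hh.1 ⟨_, hw, rfl⟩
  have hunif := la_unif hK h0 hcont hfix hHlift
  have hHt := la_slice hHcont ht
  have hHK : ∀ w ∈ B, Complex.exp (H w t) ∈ (fun z => h z t) '' frontier X := by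
    intro w hw
    rw [hHlift w hw t ht]
    exact ⟨_, hw, rfl⟩
  have hHY : ∀ w ∈ B, H w t ∈ Complex.exp ⁻¹' Y := fun w hw =>
    hYcl.frontier_subset (hKY (hHK w hw))
  set C' := connectedComponentIn (Complex.exp ⁻¹' Y) (H x t) with hC'
  set D' := connectedComponentIn (Complex.exp ⁻¹' Y) (H y t) with hD'
  have hPC' : ∀ z ∈ P, H z t ∈ C' := by
    intro z hz
    refine (hPc.image _ (hHt.mono hPB)).subset_connectedComponentIn ⟨x, hxP, rfl⟩ ?_ ⟨z, hz, rfl⟩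
    rintro _ ⟨w, hw, rfl⟩
    exact hHY w (hPB hw)
  have hQD' : ∀ z ∈ Q, H z t ∈ D' := by
    intro z hz
    refine (hQc.image _ (hHt.mono hQB)).subset_connectedComponentIn ⟨y, hyQ, rfl⟩ ?_ ⟨z, hz, rfl⟩
    rintro _ ⟨w, hw, rfl⟩
    exact hHY w (hQB hw)
  have hC'g : LaGood C' := by
    refine la_good hYcl h0Y (hXtb t ht) hYc (fun m => ?_)
    obtain ⟨m', hm'⟩ := hunif m
    obtain ⟨z, hz, hzm⟩ := hPl m'
    exact ⟨_, hPC' z hz, hm' z (hPB hz) hzm t ht⟩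
  have hD'g : LaGood D' := by
    refine la_good hYcl h0Y (hXtb t ht) hYc (fun m => ?_)
    obtain ⟨m', hm'⟩ := hunif m
    obtain ⟨z, hz, hzm⟩ := hQl m'
    exact ⟨_, hQD' z hz, hm' z (hQB hz) hzm t ht⟩
  have hZ'cl : IsClosed (Complex.exp ⁻¹' Y) := hYcl.preimage Complex.continuous_exp
  have hCD' : Disjoint C' D' := by
    rw [disjoint_left]
    intro w hwC hwD
    have heq : C' = D' := by
      rw [hC', hD', connectedComponentIn_eq hwC, ← connectedComponentIn_eq hwD]
    obtain ⟨I, hIc, hIB, hIH⟩ := la_lift_inv hK ht hcont (hinj t ht) (hfix t ht) hHcont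
      (hHinj t ht) hH0 hHlift
    have hfc := la_frontier_conn hC'g.closed hC'g.conn hC'g.compl
    have hff : frontier C' = C' ∩ Complex.exp ⁻¹' (frontier Y) := by
      rw [hC', la_comp_frontier hZ'cl, la_frontier_hat]
    have hsub : frontier C' ⊆ Complex.exp ⁻¹' ((fun z => h z t) '' frontier X) := by
      rw [hff]
      exact fun v hv => hYfr hv.2
    have hmx : H x t ∈ frontier C' := by
      rw [hff]; exact ⟨hPC' x hxP, hKY (hHK x hx.2)⟩
    have hmy : H y t ∈ frontier C' := by
      rw [hff]; exact ⟨by rw [heq]; exact hQD' y hyQ, hKY (hHK y hy.2)⟩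
    have himg := (hfc.image I (hIc.mono hsub)).subset_connectedComponentIn
      (F := Complex.exp ⁻¹' X) (x := x) ⟨_, hmx, hIH x hx.2⟩ (by
        rintro _ ⟨v, hv, rfl⟩
        exact hfX (hIB v (hsub hv)))
    have hyC : y ∈ C := by
      have h1 := himg ⟨_, hmy, hIH y hy.2⟩
      have h2 := hx.1
      rw [hCc] at h2 ⊢
      rwa [connectedComponentIn_eq h2]
    exact disjoint_left.1 hCD0 hyC hy.1
  -- transport
  obtain ⟨G, hG1, hG2, hG3⟩ := la_homotopy (A := ℂ × ℂ) (S := P ×ˢ Q)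
    (F := fun p s => H p.2 s - H p.1 s) (g := fun p => Λ0 p.1 p.2)
    (by
      apply ContinuousOn.sub
      · exact hHcont.comp (f := fun q : (ℂ × ℂ) × ℝ => (q.1.2, q.2)) (by fun_prop)
          (fun q hq => ⟨hQB hq.1.2, hq.2⟩)
      · exact hHcont.comp (f := fun q : (ℂ × ℂ) × ℝ => (q.1.1, q.2)) (by fun_prop)
          (fun q hq => ⟨hPB hq.1.1, hq.2⟩))
    (by
      intro p hp s hs heq
      have := hHinj s hs (hQB hp.2) (hPB hp.1) (sub_eq_zero.1 heq)
      have h2 := hQD hp.2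
      rw [this] at h2
      exact disjoint_left.1 hCD0 (hPC hp.1) h2)
    (hΛP.cont.mono (prod_mono hPC hQD))
    (by
      intro p hp
      rw [hΛP.exp _ (hPC hp.1) _ (hQD hp.2), hH0 _ (hQB hp.2), hH0 _ (hPB hp.1)])
  have hGs : ∀ p ∈ P ×ˢ Q, ContinuousOn (G p) (Icc 0 1) := by
    intro p hp
    exact hG1.comp (f := fun s : ℝ => (p, s)) (by fun_prop) (fun s hs => ⟨hp, hs⟩)
  have hGt : ContinuousOn (fun p => G p t) (P ×ˢ Q) :=
    hG1.comp (f := fun p : ℂ × ℂ => (p, t)) (by fun_prop) (fun p hp => ⟨hp, ht⟩)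
  have hlogc : ∀ w ∈ B, ContinuousOn (fun s => Complex.log (laB - H w s)) (Icc 0 1) := by
    intro w hw
    apply ContinuousOn.clog (continuousOn_const.sub (la_slice' hHcont hw))
    intro s hs
    exact Or.inl (la_subB (hneg w hw s hs).le)
  have hbne : ∀ w ∈ B, ∀ s ∈ Icc (0:ℝ) 1, laB - H w s ≠ 0 := fun w hw s hs =>
    la_ne_of_re (la_subB (hneg w hw s hs).le)
  have hleftmap : ∀ A A' : Set ℂ, A ⊆ B → (∀ z ∈ A, H z t ∈ A') →
      Tendsto (fun z => H z t) (laLeft A) (Bornology.cobounded ℂ ⊓ 𝓟 A') := by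
    intro A A' hAB hAA'
    refine Tendsto.mono_right ?_ (laLeft_le A')
    refine tendsto_inf.2 ?_
    constructor
    · rw [tendsto_comap_iff, tendsto_atBot]
      intro m
      obtain ⟨m', hm'⟩ := hunif m
      filter_upwards [laLeft_mem A, laLeft_lt A m'] with w hw hwm
      exact (hm' w (hAB hw) hwm t ht).le
    · rw [tendsto_principal]
      filter_upwards [laLeft_mem A] with w hw using hAA' w hw
  have hnQ := laLeft_neBot hQl
  have hnP := laLeft_neBot hPl
  obtain ⟨Λ, hLP⟩ := la_existsP (C := C') hD'g hCD'
  obtain ⟨Λ', hLQ⟩ := la_existsQ (D := D') hC'g hCD'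
  -- P side
  have e1 : Λ (H x t) (H y t) = G (x, y) t := by
    have hT := la_transport hQB hHcont hneg hunif (a := x) (hPB hxP)
      (γ := fun w s => G (x, w) s - Complex.log (laB - H w s) + Real.pi * Complex.I)
      (by
        intro w hw
        exact ((hGs (x, w) ⟨hxP, hw⟩).sub (hlogc w (hQB hw))).add continuousOn_const)
      (by
        intro w hw s hs
        have h1 := hbne w (hQB hw) s hs
        have h2 : H w s - laB ≠ 0 := by rw [← neg_sub]; exact neg_ne_zero.2 h1
        rw [Complex.exp_add, Complex.exp_sub, hG2 (x, w) ⟨hxP, hw⟩ s hs, Complex.exp_log h1,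
          Complex.exp_pi_mul_I]
        field_simp
        ring)
      (by
        have h1 := (hΛP.lim x (hPC hxP)).mono_left
          ((laLeft_le Q).trans (inf_le_inf_left _ (principal_mono.2 hQD)))
        refine h1.congr' ?_
        filter_upwards [laLeft_mem Q] with w hw
        rw [hG3 (x, w) ⟨hxP, hw⟩, hH0 w (hQB hw)]) ht
    have hL := (hLP.lim (H x t) (hPC' x hxP)).comp (hleftmap Q D' hQB hQD')
    refine la_unique hQc (l := laLeft Q) inf_le_right (f := fun w => Λ (H x t) (H w t))
      (g := fun w => G (x, w) t) ?_ ?_ ?_ ?_ hyQ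
    · exact hLP.cont.comp (f := fun w => (H x t, H w t))
        (continuousOn_const.prodMk (hHt.mono hQB)) (fun w hw => ⟨hPC' x hxP, hQD' w hw⟩)
    · exact hGt.comp (f := fun w : ℂ => (x, w)) (by fun_prop) (fun w hw => ⟨hxP, hw⟩)
    · intro w hw
      rw [hLP.exp _ (hPC' x hxP) _ (hQD' w hw), hG2 (x, w) ⟨hxP, hw⟩ t ht]
    · have := hL.sub hT
      simp only [sub_zero] at this
      refine this.congr (fun w => ?_)
      simp only [Function.comp]
      ring
  have e2 : Λ' (H x t) (H y t) = G (x, y) t := by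
    have hT := la_transport hPB hHcont hneg hunif (a := y) (hQB hyQ)
      (γ := fun z s => G (z, y) s - Complex.log (laB - H z s))
      (by
        intro w hw
        exact ((hGs (w, y) ⟨hw, hyQ⟩).sub (hlogc w (hPB hw))))
      (by
        intro w hw s hs
        have h1 := hbne w (hPB hw) s hs
        have h2 : H w s - laB ≠ 0 := by rw [← neg_sub]; exact neg_ne_zero.2 h1
        rw [Complex.exp_sub, hG2 (w, y) ⟨hw, hyQ⟩ s hs, Complex.exp_log h1]
        field_simp
        ring)
      (by
        have h1 := (hΛQ.lim y (hQD hyQ)).mono_left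
          ((laLeft_le P).trans (inf_le_inf_left _ (principal_mono.2 hPC)))
        refine h1.congr' ?_
        filter_upwards [laLeft_mem P] with w hw
        rw [hG3 (w, y) ⟨hw, hyQ⟩, hH0 w (hPB hw)]) ht
    have hL := (hLQ.lim (H y t) (hQD' y hyQ)).comp (hleftmap P C' hPB hPC')
    refine la_unique hPc (l := laLeft P) inf_le_right (f := fun w => Λ' (H w t) (H y t))
      (g := fun w => G (w, y) t) ?_ ?_ ?_ ?_ hxP
    · exact hLQ.cont.comp (f := fun w => (H w t, H y t))
        ((hHt.mono hPB).prodMk continuousOn_const) (fun w hw => ⟨hPC' w hw, hQD' y hyQ⟩)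
    · exact hGt.comp (f := fun w : ℂ => (w, y)) (by fun_prop) (fun w hw => ⟨hw, hyQ⟩)
    · intro w hw
      rw [hLQ.exp _ (hPC' w hw) _ (hQD' y hyQ), hG2 (w, y) ⟨hw, hyQ⟩ t ht]
    · have := hL.sub hT
      simp only [sub_zero] at this
      refine this.congr (fun w => ?_)
      simp only [Function.comp]
      ring
  -- conclusion
  have hall : ∀ z ∈ C', ∀ w ∈ D', Λ z w = Λ' z w := by
    intro z hz w hw
    have := la_const (hC'g.conn.prod hD'g.conn) (f := fun p : ℂ × ℂ => Λ p.1 p.2)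
        (g := fun p : ℂ × ℂ => Λ' p.1 p.2) hLP.cont hLQ.cont
        (fun p hp => by rw [hLP.exp _ hp.1 _ hp.2, hLQ.exp _ hp.1 _ hp.2])
        (x := (z, w)) (y := (H x t, H y t)) ⟨hz, hw⟩ ⟨hPC' x hxP, hQD' y hyQ⟩
    simp only [e1, e2, sub_self] at this
    exact sub_eq_zero.1 this
  refine la_IV hC'g hD'g hCD' hLP ⟨hLP.cont, hLP.exp, fun w hw => ?_⟩
  refine (hLQ.lim w hw).congr' ?_
  filter_upwards [mem_inf_of_right (mem_principal_self C')] with z hz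
  rw [hall z hz w hw]
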